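/- Every finitely generated co-Hopfian virtually free group G is ∀∃-homogeneous: for every n and any two n-tuples u⃗ and v⃗ of elements of G having the same ∀∃-type, there exists an automorphism of G mapping u⃗ to v⃗. -/

import Mathlib

open FirstOrder Language

/-- Function symbols of the first-order language of groups:
a binary multiplication, a unary inverse and a constant for the identity. -/
inductive GroupFunc : ℕ → Type
  | mul : GroupFunc 2
  | inv : GroupFunc 1
  | one : GroupFunc 0

/-- The first-order language of groups. -/
def groupLang : FirstOrder.Language :=
  { Functions := GroupFunc
    Relations := fun _ => Empty }

/-- Every group is a structure for the language of groups in the natural way. -/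
instance groupLangStructure (G : Type*) [Group G] : groupLang.Structure G where
  funMap {n} f v :=
    match f with
    | .mul => v 0 * v 1
    | .inv => (v 0)⁻¹
    | .one => 1
  RelMap {n} r _ := r.elim

/-- Existential formulas: iterated existential quantifications of a
quantifier-free formula. -/
inductive IsExistentialQF {α : Type*} : ∀ {n : ℕ}, groupLang.BoundedFormula α n → Prop
  | of_isQF {n : ℕ} {φ : groupLang.BoundedFormula α n} (h : φ.IsQF) : IsExistentialQF φ
  | ex {n : ℕ} {φ : groupLang.BoundedFormula α (n + 1)} (h : IsExistentialQF φ) :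
      IsExistentialQF φ.ex

/-- Universal formulas: iterated universal quantifications of a
quantifier-free formula. -/
inductive IsUniversalQF {α : Type*} : ∀ {n : ℕ}, groupLang.BoundedFormula α n → Prop
  | of_isQF {n : ℕ} {φ : groupLang.BoundedFormula α n} (h : φ.IsQF) : IsUniversalQF φ
  | all {n : ℕ} {φ : groupLang.BoundedFormula α (n + 1)} (h : IsUniversalQF φ) :
      IsUniversalQF φ.all

/-- ∀∃-formulas: iterated universal quantifications of an existential formula. -/
inductive IsAE {α : Type*} : ∀ {n : ℕ}, groupLang.BoundedFormula α n → Prop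
  | of_existential {n : ℕ} {φ : groupLang.BoundedFormula α n} (h : IsExistentialQF φ) : IsAE φ
  | all {n : ℕ} {φ : groupLang.BoundedFormula α (n + 1)} (h : IsAE φ) : IsAE φ.all

/-- A group is virtually free if it has a free subgroup of finite index. -/
def VirtuallyFree (G : Type*) [Group G] : Prop :=
  ∃ H : Subgroup G, H.FiniteIndex ∧ Nonempty (IsFreeGroup H)

/-- A group is co-Hopfian if every injective endomorphism is surjective. -/
def CoHopfian (G : Type*) [Group G] : Prop :=
  ∀ φ : G →* G, Function.Injective φ → Function.Surjective φ

/-- Two homomorphisms `φ, φ' : G → G'` are equivalent if they coincide up to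
conjugation on every finite subgroup of `G`. -/
def HomEquiv {G G' : Type*} [Group G] [Group G'] (φ φ' : G →* G') : Prop :=
  ∀ H : Subgroup G, (H : Set G).Finite →
    ∃ g' : G', ∀ h ∈ H, φ' h = g' * φ h * g'⁻¹

/-- Two groups are ∀∃-equivalent if they satisfy the same ∀∃-sentences. -/
def AEEquivalent (G : Type*) (G' : Type*) [Group G] [Group G'] : Prop :=
  ∀ φ : groupLang.Sentence, IsAE φ → (G ⊨ φ ↔ G' ⊨ φ)

/-- Two groups are ∃-equivalent if they satisfy the same existential sentences. -/
def ExistentiallyEquivalent (G : Type*) (G' : Type*) [Group G] [Group G'] : Prop :=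
  ∀ φ : groupLang.Sentence, IsExistentialQF φ → (G ⊨ φ ↔ G' ⊨ φ)

/-- An endomorphism is rigid-testing: `G` is rigid if every endomorphism
equivalent to the identity is an automorphism. -/
def Rigid (G : Type*) [Group G] : Prop :=
  ∀ φ : G →* G, HomEquiv φ (MonoidHom.id G) → Function.Bijective φ

/-- `Out G` is finite, expressed as: the inner automorphisms form a finite index
subgroup of `Aut G`. -/
def OutFinite (G : Type*) [Group G] : Prop :=
  (MulAut.conj : G →* MulAut G).range.FiniteIndex

/-- Iterated composition of an endomorphism. -/
def homPow {G : Type*} [Group G] (φ : G →* G) : ℕ → (G →* G)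
  | 0 => MonoidHom.id G
  | n + 1 => φ.comp (homPow φ n)

/-- An endomorphism `φ` of `G` is class-permuting if some positive power of `φ`
is equivalent to the identity of `G`. -/
def ClassPermuting {G : Type*} [Group G] (φ : G →* G) : Prop :=
  ∃ n : ℕ, 1 ≤ n ∧ HomEquiv (homPow φ n) (MonoidHom.id G)

/-- A maximal finite subgroup: a finite subgroup maximal with respect to
inclusion among finite subgroups. -/
def MaximalFiniteSubgroup {G : Type*} [Group G] (A : Subgroup G) : Prop :=
  (A : Set G).Finite ∧ ∀ B : Subgroup G, (B : Set G).Finite → A ≤ B → A = B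

/-- Two subgroups are conjugate. -/
def SubgroupConj {G : Type*} [Group G] (A B : Subgroup G) : Prop :=
  ∃ g : G, B = A.map (MulAut.conj g).toMonoidHom

/-- A group is strongly co-Hopfian if there is a finite subset `F` of
`G \ {1}` such that every endomorphism whose kernel misses `F` is an
automorphism. -/
def StronglyCoHopfian (G : Type*) [Group G] : Prop :=
  ∃ F : Finset G, (1 : G) ∉ F ∧
    ∀ φ : G →* G, (∀ f ∈ F, φ f ≠ 1) → Function.Bijective φ

/-- A group is finitely presented. -/
def GroupFinitelyPresented (G : Type*) [Group G] : Prop :=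
  ∃ (n : ℕ) (rels : Finset (FreeGroup (Fin n))),
    Nonempty (PresentedGroup (rels : Set (FreeGroup (Fin n))) ≃* G)

/-!
Let `N` be a free normal subgroup of finite index in `G`. The two ends of a nontrivial element of
`N` are separated by cuts of the Cayley graph of `G`. Among these cuts, those with the smallest
coboundary which moreover cross the fewest other such cuts are pairwise nested, so that they are the
edges of a tree on which `G` acts with finite stabilizers: a vertex stabilizer containing a
nontrivial element of `N` would fix a cut separating its ends. Finite subgroups fix vertices, and
therefore fall into finitely many conjugacy classes.

Suppose that an endomorphism `φ` is a conjugation on every finite subgroup, and choose a map `γ`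
from vertices to `G` such that `γ (g • v) = φ g * γ v * g⁻¹`. The jumps of `γ` across the edges of a
single orbit twist the identity of `G` into an endomorphism `ψ`. Either an edge and its reverse are
folded together, which a co-Hopfian group does not allow, or `ψ` is injective by ping-pong, hence
bijective; composing `φ` with `ψ⁻¹` then removes the jumps in this orbit. After finitely many steps
`γ` is constant and `φ` is inner. So `G` is rigid.

Finally, if `u` and `v` have the same ∀∃-type, then some endomorphism `f` maps `u` to `v` and is
injective on the conjugacy classes of homomorphisms `K → G`, for `K` in a finite list of finite
subgroups. It permutes these classes, so that a power of `f` is a conjugation on every finite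
subgroup; by rigidity, `f` is an automorphism.
-/

open scoped Pointwise

section HalfSpaces

variable {V : Type*} {H : Set (Set V)} {A B : Set V} {u u' v v' w w' : V}

/-- The members of `H` containing `w` but not `v`. When `H` is the set of half-spaces of a tree,
these are the oriented edges of the path from `v` to `w`, ordered by reverse inclusion. -/
def separators (H : Set (Set V)) (v w : V) : Set (Set V) := {A ∈ H | v ∉ A ∧ w ∈ A}

/-- Two points lying in the same members of `H`: the equality of vertices in the tree obtained by
collapsing all edges whose half-spaces are not in `H`. -/
def Indist (H : Set (Set V)) (v w : V) : Prop := ∀ A ∈ H, v ∈ A ↔ w ∈ A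

/-- `A` is the half-space of an oriented edge from `v` to `w`: up to complement, it is the only
member of `H` distinguishing `v` from `w`. -/
structure IsEdge (H : Set (Set V)) (A : Set V) (v w : V) : Prop where
  mem : A ∈ H
  left_notMem : v ∉ A
  right_mem : w ∈ A
  mem_iff : ∀ B ∈ H, B ≠ A → B ≠ Aᶜ → (v ∈ B ↔ w ∈ B)

/-- Two sets are nested if one of `A`, `Aᶜ` is contained in one of `B`, `Bᶜ`: the half-spaces of a
tree, and the cuts dual to them, are pairwise nested. -/
def Nested (A B : Set V) : Prop := A ⊆ B ∨ B ⊆ A ∨ A ⊆ Bᶜ ∨ Aᶜ ⊆ B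

/-- The family of half-spaces of a tree, where vertices are points of `V` up to `Indist H`. Points
need not be separated by `H`, so that passing to a subfamily closed under complement, which
collapses the other edges, does not change `V`. -/
structure IsHalfSpaceSystem (H : Set (Set V)) : Prop where
  compl_mem : ∀ A ∈ H, Aᶜ ∈ H
  nested : ∀ A ∈ H, ∀ B ∈ H, Nested A B
  finite_separators : ∀ v w, (separators H v w).Finite
  exists_isEdge : ∀ A ∈ H, ∃ v w, IsEdge H A v w

lemma Nested.compl_left (h : Nested A B) : Nested Aᶜ B := by
  rcases h with h | h | h | h
  exacts [Or.inr (Or.inr (Or.inr (by rwa [_root_.compl_compl]))),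
    Or.inr (Or.inr (Or.inl (Set.compl_subset_compl.2 h))),
    Or.inr (Or.inl (Set.subset_compl_comm.1 h)), Or.inl h]

lemma Nested.symm (h : Nested A B) : Nested B A := by
  rcases h with h | h | h | h
  exacts [Or.inr (Or.inl h), Or.inl h, Or.inr (Or.inr (Or.inl (Set.subset_compl_comm.1 h))),
    Or.inr (Or.inr (Or.inr (Set.compl_subset_comm.1 h)))]

lemma Nested.compl_right (h : Nested A B) : Nested A Bᶜ := h.symm.compl_left.symm

lemma Indist.symm (h : Indist H v w) : Indist H w v := fun A hA => (h A hA).symm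

lemma Indist.trans (h : Indist H u v) (h' : Indist H v w) : Indist H u w :=
  fun A hA => (h A hA).trans (h' A hA)

lemma Indist.separators_eq (hv : Indist H v v') (hw : Indist H w w') :
    separators H v w = separators H v' w' := by
  ext A
  exact and_congr_right fun hA => and_congr (not_congr (hv A hA)) (hw A hA)

namespace IsEdge

lemma of_indist (h : IsEdge H A v w) (hv : Indist H v v') (hw : Indist H w w') :
    IsEdge H A v' w' where
  mem := h.mem
  left_notMem := fun h' => h.left_notMem ((hv A h.mem).2 h')
  right_mem := (hw A h.mem).1 h.right_mem
  mem_iff := fun B hB h₁ h₂ => ((hv B hB).symm.trans (h.mem_iff B hB h₁ h₂)).trans (hw B hB)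

lemma mono {H' : Set (Set V)} (h : IsEdge H A v w) (hH' : H' ⊆ H) (hA : A ∈ H') :
    IsEdge H' A v w where
  mem := hA
  left_notMem := h.left_notMem
  right_mem := h.right_mem
  mem_iff := fun B hB => h.mem_iff B (hH' hB)

lemma compl (h : IsEdge H A v w) (hA : Aᶜ ∈ H) : IsEdge H Aᶜ w v where
  mem := hA
  left_notMem := fun h' => h' h.right_mem
  right_mem := h.left_notMem
  mem_iff := fun B hB h₁ h₂ => (h.mem_iff B hB (_root_.compl_compl A ▸ h₂) h₁).symm

lemma indist_of_notMem {H' : Set (Set V)} (h : IsEdge H A v w) (hH' : H' ⊆ H) (hA : A ∉ H')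
    (hA' : Aᶜ ∉ H') : Indist H' v w := fun B hB =>
  h.mem_iff B (hH' hB) (by rintro rfl; exact hA hB) (by rintro rfl; exact hA' hB)

lemma indist_right (h : IsEdge H A v w) (h' : IsEdge H A v w') : Indist H w w' := by
  intro B hB
  by_cases h₁ : B = A
  · simp only [h₁, h.right_mem, h'.right_mem]
  by_cases h₂ : B = Aᶜ
  · simp only [h₂, Set.mem_compl_iff, h.right_mem, h'.right_mem]
  exact (h.mem_iff B hB h₁ h₂).symm.trans (h'.mem_iff B hB h₁ h₂)

lemma separators_ssubset (h : IsEdge H A v v') (hw : w ∈ A) :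
    separators H v' w ⊂ separators H v w := by
  refine ⟨fun B hB => ⟨hB.1, fun hv => hB.2.1 ?_, hB.2.2⟩,
    fun hle => (hle ⟨h.mem, h.left_notMem, hw⟩).2.1 h.right_mem⟩
  exact (h.mem_iff B hB.1 (by rintro rfl; exact h.left_notMem hv)
    (by rintro rfl; exact hB.2.2 hw)).1 hv

end IsEdge

namespace IsHalfSpaceSystem

lemma mono {H' : Set (Set V)} (hH : IsHalfSpaceSystem H) (hH' : H' ⊆ H)
    (hcompl : ∀ A ∈ H', Aᶜ ∈ H') : IsHalfSpaceSystem H' where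
  compl_mem := hcompl
  nested := fun A hA B hB => hH.nested A (hH' hA) B (hH' hB)
  finite_separators := fun v w => (hH.finite_separators v w).subset fun _ hA => ⟨hH' hA.1, hA.2⟩
  exists_isEdge := fun A hA =>
    let ⟨v, w, h⟩ := hH.exists_isEdge A (hH' hA)
    ⟨v, w, h.mono hH' hA⟩

variable (hH : IsHalfSpaceSystem H)
include hH

lemma isEdge_compl (h : IsEdge H A v w) : IsEdge H Aᶜ w v := h.compl (hH.compl_mem A h.mem)

lemma isEdge_unique (h : IsEdge H A v w) (h' : IsEdge H A v' w') :
    Indist H v v' ∧ Indist H w w' := by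
  have key : ∀ B ∈ H, v ∈ B → v' ∈ B := by
    intro B hB hv
    by_contra hv'
    have hw : w ∈ B := (h.mem_iff B hB (by rintro rfl; exact h.left_notMem hv)
      (by rintro rfl; exact hv' h'.left_notMem)).1 hv
    have hw' : w' ∉ B := fun hw' => hv' <| (h'.mem_iff B hB
      (by rintro rfl; exact h.left_notMem hv) (by rintro rfl; exact hv' h'.left_notMem)).2 hw'
    rcases hH.nested A h.mem B hB with hAB | hBA | hAB | hAB
    · exact hw' (hAB h'.right_mem)
    · exact h.left_notMem (hBA hv)
    · exact hAB h.right_mem hw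
    · exact hv' (hAB h'.left_notMem)
  have hv : Indist H v v' := fun B hB =>
    ⟨key B hB, fun hv' => by_contra fun hv => key Bᶜ (hH.compl_mem B hB) hv hv'⟩
  exact ⟨hv, (h.of_indist hv fun _ _ => Iff.rfl).indist_right h'⟩

lemma exists_mem_separators (h : ¬ Indist H v w) : (separators H v w).Nonempty := by
  contrapose! h
  intro A hA
  constructor
  · intro hv
    by_contra hw
    exact h.subset (⟨hH.compl_mem A hA, not_not.2 hv, hw⟩ : Aᶜ ∈ separators H v w)
  · intro hw
    by_contra hv
    exact h.subset (⟨hA, hv, hw⟩ : A ∈ separators H v w)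

/-- The greatest separator of `v` and `w` is the first edge of the path from `v` to `w`. -/
lemma exists_isGreatest (h : ¬ Indist H v w) :
    ∃ A v', IsGreatest (separators H v w) A ∧ IsEdge H A v v' := by
  obtain ⟨A, hA⟩ := (hH.finite_separators v w).exists_maximal (hH.exists_mem_separators h)
  obtain ⟨hAH, hvA, hwA⟩ := hA.1
  have hgreatest : IsGreatest (separators H v w) A := by
    refine ⟨hA.1, fun B hB => ?_⟩
    rcases hH.nested A hAH B hB.1 with hAB | hBA | hAB | hAB
    · exact hA.2 hB hAB
    · exact hBA
    · exact absurd hB.2.2 (hAB hwA)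
    · exact absurd (hAB hvA) hB.2.1
  obtain ⟨p, q, hpq⟩ := hH.exists_isEdge A hAH
  have key : ∀ B ∈ H, v ∈ B → p ∈ B := by
    intro B hB hv
    by_contra hp
    have hBA : B ≠ A := by rintro rfl; exact hvA hv
    have hBA' : B ≠ Aᶜ := by rintro rfl; exact hp hpq.left_notMem
    rcases hH.nested A hAH B hB with hAB | hAB | hAB | hAB
    · exact hp ((hpq.mem_iff B hB hBA hBA').2 (hAB hpq.right_mem))
    · exact hvA (hAB hv)
    · have hB' : Bᶜ ⊆ A := hgreatest.2 ⟨hH.compl_mem B hB, not_not.2 hv, hAB hwA⟩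
      exact hBA' (compl_eq_comm.1 (hB'.antisymm hAB)).symm
    · exact hp (hAB hpq.left_notMem)
  have hpv : Indist H p v := fun B hB =>
    ⟨fun hp => by_contra fun hv => key Bᶜ (hH.compl_mem B hB) hv hp, key B hB⟩
  exact ⟨A, q, hgreatest, hpq.of_indist hpv fun _ _ => Iff.rfl⟩

lemma isGreatest_of_isEdge (h : IsEdge H A v w) (hu : u ∈ A) :
    IsGreatest (separators H v u) A := by
  refine ⟨⟨h.mem, h.left_notMem, hu⟩, fun B hB => ?_⟩
  by_cases hBA : B = A
  · exact hBA.subset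
  have hBA' : B ≠ Aᶜ := by rintro rfl; exact hB.2.2 hu
  rcases hH.nested A h.mem B hB.1 with hAB | hAB | hAB | hAB
  · exact absurd ((h.mem_iff B hB.1 hBA hBA').2 (hAB h.right_mem)) hB.2.1
  · exact hAB
  · exact absurd hB.2.2 (hAB hu)
  · exact absurd (hAB h.left_notMem) hB.2.1

lemma eq_or_subset_compl (hA : IsGreatest (separators H v u) A)
    (hB : IsGreatest (separators H v u') B) : A = B ∨ B ⊆ Aᶜ := by
  obtain ⟨⟨hAH, hvA, huA⟩, hAmax⟩ := hA
  obtain ⟨⟨hBH, hvB, huB⟩, hBmax⟩ := hB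
  rcases hH.nested A hAH B hBH with hAB | hAB | hAB | hAB
  · exact Or.inl (hAB.antisymm (hAmax ⟨hBH, hvB, hAB huA⟩))
  · exact Or.inl (Set.Subset.antisymm (hBmax ⟨hAH, hvA, hAB huB⟩) hAB)
  · exact Or.inr (Set.subset_compl_comm.1 hAB)
  · exact absurd (hAB hvA) hvB

lemma induction_to (w : V) {P : V → Prop} (base : ∀ v, Indist H v w → P v)
    (step : ∀ A v v', IsEdge H A v v' → w ∈ A → P v' → P v) (v : V) : P v := by
  induction hn : (separators H v w).ncard using Nat.strong_induction_on generalizing v with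
  | _ n ih =>
    subst hn
    by_cases h : Indist H v w
    · exact base v h
    obtain ⟨A, v', hA, hv'⟩ := hH.exists_isGreatest h
    exact step A v v' hv' hA.1.2.2 <| ih _ (Set.ncard_lt_ncard
      (hv'.separators_ssubset hA.1.2.2) (hH.finite_separators v w)) v' rfl

lemma eq_of_forall_isEdge {β : Type*} {f : V → β} (hindist : ∀ v w, Indist H v w → f v = f w)
    (hedge : ∀ A v w, IsEdge H A v w → f v = f w) (v w : V) : f v = f w :=
  hH.induction_to w (fun v h => hindist v w h) (fun A v v' h _ hv' => (hedge A v v' h).trans hv') v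

end IsHalfSpaceSystem

section Holonomy

variable {X : Type*} [Group X] {z : Set V → X}

/-- `IsHolonomy H z w v x`: the product of the labels `z` of the edges on the path from `v` to `w`
is `x`. -/
inductive IsHolonomy (H : Set (Set V)) (z : Set V → X) (w : V) : V → X → Prop
  | of_indist {v : V} : Indist H v w → IsHolonomy H z w v 1
  | cons {A : Set V} {v v' : V} {x : X} : IsEdge H A v v' → w ∈ A → IsHolonomy H z w v' x →
      IsHolonomy H z w v (z A * x)

lemma IsHolonomy.unique (hH : IsHalfSpaceSystem H) {x y : X} (hx : IsHolonomy H z w v x)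
    (hvu : Indist H v u) (hy : IsHolonomy H z w u y) : x = y := by
  induction hx generalizing u y with
  | of_indist hv =>
    cases hy with
    | of_indist => rfl
    | cons hB hwB _ =>
      exact absurd ((hvu.symm.trans hv _ hB.mem).2 hwB) hB.left_notMem
  | @cons A v v' x hA hwA _ ih =>
    cases hy with
    | of_indist hu => exact absurd ((hvu.trans hu _ hA.mem).2 hwA) hA.left_notMem
    | @cons B _ u' y hB hwB hy =>
      have hB' : IsEdge H B v u' := hB.of_indist hvu.symm fun _ _ => Iff.rfl
      have hAB : A = B :=
        (hH.isGreatest_of_isEdge hA hwA).unique (hH.isGreatest_of_isEdge hB' hwB)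
      subst hAB
      rw [ih (hA.indist_right hB') hy]

lemma IsHalfSpaceSystem.exists_primitive (hH : IsHalfSpaceSystem H)
    (hz : ∀ A ∈ H, z Aᶜ = (z A)⁻¹) :
    ∃ η : V → X, (∀ v w, Indist H v w → η v = η w) ∧
      ∀ A v w, IsEdge H A v w → η w = η v * z A := by
  rcases isEmpty_or_nonempty V with _ | ⟨⟨o⟩⟩
  · exact ⟨isEmptyElim, fun v => isEmptyElim v, fun _ v => isEmptyElim v⟩
  have hex : ∀ v, ∃ x, IsHolonomy H z o v x :=
    hH.induction_to o (fun v hv => ⟨1, .of_indist hv⟩)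
      fun A v v' h ho ⟨x, hx⟩ => ⟨z A * x, .cons h ho hx⟩
  choose δ hδ using hex
  have hstep : ∀ A v w, IsEdge H A v w → o ∈ A → δ v = z A * δ w := fun A v w h ho =>
    (hδ v).unique hH (fun _ _ => Iff.rfl) (.cons h ho (hδ w))
  refine ⟨fun v => (δ v)⁻¹, fun v w h => inv_inj.2 ((hδ v).unique hH h (hδ w)), fun A v w h => ?_⟩
  by_cases ho : o ∈ A
  · simp only [hstep A v w h ho]; group
  · simp only [hstep Aᶜ w v (hH.isEdge_compl h) ho, hz A h.mem]; group

end Holonomy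

end HalfSpaces

section Equivariance

variable {V : Type*} {H : Set (Set V)} {A B : Set V} {v w : V} {G : Type*} [Group G]
  [MulAction G V]

section Smul

variable (hG : ∀ g : G, ∀ A ∈ H, g • A ∈ H)
include hG

lemma Indist.smul (h : Indist H v w) (g : G) : Indist H (g • v) (g • w) := by
  intro A hA
  have := h _ (hG g⁻¹ A hA)
  rwa [Set.mem_inv_smul_set_iff, Set.mem_inv_smul_set_iff] at this

lemma IsEdge.smul (h : IsEdge H A v w) (g : G) : IsEdge H (g • A) (g • v) (g • w) where
  mem := hG g A h.mem
  left_notMem := fun h' => h.left_notMem (Set.smul_mem_smul_set_iff.1 h')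
  right_mem := Set.smul_mem_smul_set h.right_mem
  mem_iff := fun B hB h₁ h₂ => by
    have := h.mem_iff _ (hG g⁻¹ B hB) (fun h' => h₁ (inv_smul_eq_iff.1 h'))
      (fun h' => h₂ (by rw [inv_smul_eq_iff.1 h', Set.smul_set_compl]))
    rwa [Set.mem_inv_smul_set_iff, Set.mem_inv_smul_set_iff] at this

lemma isGreatest_separators_smul (h : IsGreatest (separators H v w) A) (g : G) :
    IsGreatest (separators H (g • v) (g • w)) (g • A) := by
  refine ⟨⟨hG g A h.1.1, fun h' => h.1.2.1 (Set.smul_mem_smul_set_iff.1 h'),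
    Set.smul_mem_smul_set h.1.2.2⟩, fun B hB => ?_⟩
  refine Set.subset_smul_set_iff.2 (h.2 ⟨hG g⁻¹ B hB.1, ?_, ?_⟩)
  · rw [Set.mem_inv_smul_set_iff]; exact hB.2.1
  · rw [Set.mem_inv_smul_set_iff]; exact hB.2.2

end Smul

/-- The subfamily of `H` of translates of `A` and of `Aᶜ`. -/
def unorientedOrbit (G : Type*) {V : Type*} [Group G] [MulAction G V] (A : Set V) :
    Set (Set V) :=
  {B | ∃ g : G, B = g • A ∨ B = g • Aᶜ}

lemma compl_mem_unorientedOrbit (h : B ∈ unorientedOrbit G A) : Bᶜ ∈ unorientedOrbit G A := by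
  obtain ⟨g, rfl | rfl⟩ := h
  · exact ⟨g, Or.inr Set.smul_set_compl.symm⟩
  · exact ⟨g, Or.inl (by rw [Set.smul_set_compl, _root_.compl_compl])⟩

lemma smul_mem_unorientedOrbit (g : G) (h : B ∈ unorientedOrbit G A) :
    g • B ∈ unorientedOrbit G A := by
  obtain ⟨k, rfl | rfl⟩ := h
  · exact ⟨g * k, Or.inl (mul_smul g k A).symm⟩
  · exact ⟨g * k, Or.inr (mul_smul g k Aᶜ).symm⟩

section Cocycle

variable {X : Type*} [Group X]

lemma IsHalfSpaceSystem.exists_cocycle (hH : IsHalfSpaceSystem H)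
    (hG : ∀ g : G, ∀ A ∈ H, g • A ∈ H) [Nonempty V] (ρ : G →* MulAut X) {z : Set V → X}
    (hcompl : ∀ A ∈ H, z Aᶜ = (z A)⁻¹) (hsmul : ∀ g : G, ∀ A ∈ H, z (g • A) = ρ g (z A)) :
    ∃ (η : V → X) (c : G → X), (∀ v w, Indist H v w → η v = η w) ∧
      (∀ A v w, IsEdge H A v w → η w = η v * z A) ∧ (∀ g v, η (g • v) = c g * ρ g (η v)) ∧
      ∀ g h, c (g * h) = c g * ρ g (c h) := by
  obtain ⟨η, hindist, hedge⟩ := hH.exists_primitive hcompl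
  let o : V := Classical.arbitrary V
  have hconst : ∀ (g : G) (v w : V),
      η (g • v) * (ρ g (η v))⁻¹ = η (g • w) * (ρ g (η w))⁻¹ := by
    intro g
    refine hH.eq_of_forall_isEdge (fun v w h => ?_) fun A v w h => ?_
    · rw [hindist v w h, hindist _ _ (h.smul hG g)]
    · rw [hedge A v w h, hedge _ _ _ (h.smul hG g), hsmul g A h.mem, map_mul]
      group
  obtain ⟨c, hc⟩ : ∃ c : G → X, ∀ g v, η (g • v) = c g * ρ g (η v) :=
    ⟨_, fun g v => mul_inv_eq_iff_eq_mul.1 (hconst g v o)⟩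
  refine ⟨η, c, hindist, hedge, hc, fun g h => mul_right_cancel (b := ρ (g * h) (η o)) ?_⟩
  rw [← hc, mul_smul, hc g, hc h, map_mul, map_mul ρ, MulAut.mul_apply, mul_assoc]

lemma IsHalfSpaceSystem.exists_twist (hH : IsHalfSpaceSystem H)
    (hG : ∀ g : G, ∀ A ∈ H, g • A ∈ H) [Nonempty V] {z : Set V → G}
    (hcompl : ∀ A ∈ H, z Aᶜ = (z A)⁻¹)
    (hsmul : ∀ g : G, ∀ A ∈ H, z (g • A) = g * z A * g⁻¹) :
    ∃ (η : V → G) (ψ : G →* G), (∀ v w, Indist H v w → η v = η w) ∧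
      (∀ A v w, IsEdge H A v w → η w = η v * z A) ∧ ∀ g v, η (g • v) * g = ψ g * η v := by
  obtain ⟨η, c, hindist, hedge, hc, hmul⟩ := hH.exists_cocycle hG MulAut.conj hcompl hsmul
  refine ⟨η, MonoidHom.mk' (fun g => c g * g) fun g h => ?_, hindist, hedge, fun g v => ?_⟩
  · rw [hmul, MulAut.conj_apply]; group
  · rw [hc, MulAut.conj_apply, MonoidHom.mk'_apply]; group

lemma IsHalfSpaceSystem.exists_character (hH : IsHalfSpaceSystem H)
    (hG : ∀ g : G, ∀ A ∈ H, g • A ∈ H) [Nonempty V] {z : Set V → X}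
    (hcompl : ∀ A ∈ H, z Aᶜ = (z A)⁻¹) (hsmul : ∀ g : G, ∀ A ∈ H, z (g • A) = z A) :
    ∃ (θ : V → X) (χ : G →* X), (∀ v w, Indist H v w → θ v = θ w) ∧
      (∀ A v w, IsEdge H A v w → θ w = θ v * z A) ∧ ∀ g v, θ (g • v) = χ g * θ v := by
  obtain ⟨θ, χ, hindist, hedge, hc, hmul⟩ := hH.exists_cocycle hG 1 hcompl hsmul
  exact ⟨θ, MonoidHom.mk' χ hmul, hindist, hedge, hc⟩

end Cocycle

section PingPong

variable (hH : IsHalfSpaceSystem H) (hG : ∀ g : G, ∀ A ∈ H, g • A ∈ H) {z : Set V → G}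
  (hcompl : ∀ A ∈ H, z Aᶜ = (z A)⁻¹) {η : V → G} (hindist : ∀ v w, Indist H v w → η v = η w)
  (hedge : ∀ A v w, IsEdge H A v w → η w = η v * z A) {F : Set V → Set V}
  (hF : ∀ A v w, IsEdge H A v w → IsGreatest (separators H v (z A • w)) (F A))
  (hFinj : ∀ A B v w w', IsEdge H A v w → IsEdge H B v w' → F A = F B → A = B)
include hH hG hcompl hindist hedge hF hFinj

/-- If a twist maps the edge `A` to a path with first edge `F A` and does not fold two edges with
the same origin, then it maps a path with first edge `A` to a path with first edge `F A`. -/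
lemma IsHalfSpaceSystem.twist_smul_mem (x v : V) (A : Set V)
    (hA : IsGreatest (separators H v x) A) : ((η v)⁻¹ * η x) • x ∈ F A := by
  revert A
  revert v
  refine hH.induction_to x (fun v hv A hA => absurd ((hv A hA.1.1).2 hA.1.2.2) hA.1.2.1) ?_
  intro B v v' hBv hxB ih A hA
  obtain rfl : B = A := (hH.isGreatest_of_isEdge hBv hxB).unique hA
  set y : V := ((η v')⁻¹ * η x) • x with hy
  have hyz : ((η v)⁻¹ * η x) • x = z B • y := by
    rw [hy, hedge B v v' hBv, smul_smul]; group
  rw [hyz]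
  by_cases hx : Indist H v' x
  · have hyx : y = x := by rw [hy, hindist v' x hx, inv_mul_cancel, one_smul]
    rw [hyx]
    exact (hx.smul hG (z B) _ (hF B v v' hBv).1.1).1 (hF B v v' hBv).1.2.2
  obtain ⟨C, v'', hC, hCv⟩ := hH.exists_isGreatest hx
  have hBv' := hH.isEdge_compl hBv
  have hCB : F C ⊆ (F Bᶜ)ᶜ := by
    refine (hH.eq_or_subset_compl (hF _ _ _ hBv') (hF _ _ _ hCv)).resolve_left fun h => ?_
    rw [← hFinj _ _ _ _ _ hBv' hCv h] at hC
    exact hC.1.2.2 hxB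
  have hback := (hF _ _ _ hBv').1
  have hE : z B • (F Bᶜ)ᶜ ∈ separators H v (z B • v') := by
    refine ⟨hG _ _ (hH.compl_mem _ hback.1), ?_, Set.smul_mem_smul_set hback.2.1⟩
    rw [Set.mem_smul_set_iff_inv_smul_mem, ← hcompl B hBv.mem]
    exact not_not.2 hback.2.2
  exact (hF B v v' hBv).2 hE (Set.smul_mem_smul_set (hCB (ih C hC)))

lemma IsHalfSpaceSystem.twist_injective [Nonempty V] {ψ : G →* G}
    (hψ : ∀ g v, η (g • v) * g = ψ g * η v) : Function.Injective ψ := by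
  rw [injective_iff_map_eq_one]
  intro g hg
  let o : V := Classical.arbitrary V
  have hgo : η (g • o) * g = η o := by rw [hψ, hg, one_mul]
  have hind : Indist H o (g • o) := by
    by_contra h
    obtain ⟨A, v', hA, hv'⟩ := hH.exists_isGreatest h
    have ho := hH.twist_smul_mem hG hcompl hindist hedge hF hFinj _ _ _ hA
    rw [smul_smul, mul_assoc, hgo, inv_mul_cancel, one_smul] at ho
    exact (hF A o v' hv').1.2.1 ho
  rwa [← hindist _ _ hind, mul_eq_left] at hgo

end PingPong

end Equivariance

section Folding

variable {V : Type*} {H : Set (Set V)} {A A₀ B : Set V} {v w : V} {G : Type*} [Group G]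
  [MulAction G V]

lemma mem_unorientedOrbit_comm (h : B ∈ unorientedOrbit G A) : A ∈ unorientedOrbit G B := by
  obtain ⟨g, h | h⟩ := h
  · exact ⟨g⁻¹, Or.inl (by rw [h, inv_smul_smul])⟩
  · refine ⟨g⁻¹, Or.inr ?_⟩
    rw [h, ← Set.smul_set_compl, inv_smul_smul]
    exact (_root_.compl_compl A).symm

lemma mem_unorientedOrbit_trans (hA : A ∈ unorientedOrbit G A₀) (hB : B ∈ unorientedOrbit G A) :
    B ∈ unorientedOrbit G A₀ := by
  obtain ⟨g, rfl | rfl⟩ := hB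
  · exact smul_mem_unorientedOrbit g hA
  · exact smul_mem_unorientedOrbit g (compl_mem_unorientedOrbit hA)

lemma card_stabilizer_of_mem_unorientedOrbit (h : B ∈ unorientedOrbit G A) :
    Nat.card (MulAction.stabilizer G B) = Nat.card (MulAction.stabilizer G A) := by
  obtain ⟨g, h | h⟩ := h
  · exact (Nat.card_congr (MulAction.stabilizerEquivStabilizer h).toEquiv).symm
  · rw [← stabilizer_compl (G := G) (s := A)]
    exact (Nat.card_congr (MulAction.stabilizerEquivStabilizer h).toEquiv).symm

/-- A tree is folded if some edge `(A, v, w)` and its reverse can be identified by an element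
normalizing the stabilizer of `A` and mapping `v` to `w`. -/
def IsFolded (G : Type*) {V : Type*} [Group G] [MulAction G V] (H : Set (Set V)) : Prop :=
  ∃ A v w, IsEdge H A v w ∧
    ∃ n ∈ Subgroup.normalizer (MulAction.stabilizer G A : Set G), Indist H (n • v) w

lemma commute_of_mem_stabilizer {z : Set V → G}
    (hsmul : ∀ g : G, ∀ A ∈ H, z (g • A) = g * z A * g⁻¹) (hA : A ∈ H) {g : G}
    (hg : g ∈ MulAction.stabilizer G A) : z A * g = g * z A := by
  have := hsmul g A hA
  rw [MulAction.mem_stabilizer_iff.1 hg] at this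
  exact eq_mul_inv_iff_mul_eq.1 this

lemma mem_normalizer_of_smul_eq {P Q : Set V} {g : G} (h : g • P = Q)
    (hPQ : MulAction.stabilizer G P = MulAction.stabilizer G Q) :
    g ∈ Subgroup.normalizer (MulAction.stabilizer G Q : Set G) := by
  have := MulAction.stabilizer_smul_eq_stabilizer_map_conj g P
  rw [h, hPQ] at this
  exact Subgroup.mem_normalizer_iff_map_conj_eq.2 this.symm

section NotFolded

variable (hH : IsHalfSpaceSystem H) (hG : ∀ g : G, ∀ A ∈ H, g • A ∈ H)
  (horb : ∀ A ∈ H, ∀ B ∈ H, B ∈ unorientedOrbit G A)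
  (hfin : ∀ A ∈ H, Finite (MulAction.stabilizer G A)) (hfold : ¬ IsFolded G H) {z : Set V → G}
  (hcompl : ∀ A ∈ H, z Aᶜ = (z A)⁻¹) (hsmul : ∀ g : G, ∀ A ∈ H, z (g • A) = g * z A * g⁻¹)
include hH hG hfold hsmul

lemma IsHalfSpaceSystem.exists_first_edge (hA : A ∈ H) :
    ∃ E, ∀ v w, IsEdge H A v w → IsGreatest (separators H v (z A • w)) E := by
  obtain ⟨v, w, hvw⟩ := hH.exists_isEdge A hA
  have hne : ¬ Indist H v (z A • w) := by
    intro h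
    refine hfold ⟨A, v, w, hvw, (z A)⁻¹, Subgroup.inv_mem _ ?_, by simpa using h.smul hG (z A)⁻¹⟩
    refine Subgroup.centralizer_le_normalizer _ (Subgroup.mem_centralizer_iff.2 fun g hg => ?_)
    exact (commute_of_mem_stabilizer hsmul hA hg).symm
  obtain ⟨E, -, hE, -⟩ := hH.exists_isGreatest hne
  refine ⟨E, fun v' w' h' => ?_⟩
  obtain ⟨hv, hw⟩ := hH.isEdge_unique hvw h'
  rwa [← hv.separators_eq (hw.smul hG (z A))]

include horb hfin hcompl

lemma IsHalfSpaceSystem.twist_injective_of_not_isFolded [Nonempty V] {η : V → G} {ψ : G →* G}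
    (hindist : ∀ v w, Indist H v w → η v = η w)
    (hedge : ∀ A v w, IsEdge H A v w → η w = η v * z A)
    (hψ : ∀ g v, η (g • v) * g = ψ g * η v) : Function.Injective ψ := by
  classical
  have hex : ∀ A, ∃ E, ∀ v w, IsEdge H A v w → IsGreatest (separators H v (z A • w)) E := fun A =>
    if hA : A ∈ H then hH.exists_first_edge hG hfold hsmul hA
    else ⟨∅, fun _ _ h => absurd h.mem hA⟩
  choose F hF using hex
  have hFmem : ∀ A ∈ H, F A ∈ H := fun A hA =>
    let ⟨v, w, h⟩ := hH.exists_isEdge A hA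
    (hF A v w h).1.1
  have hFsmul : ∀ g : G, ∀ A ∈ H, F (g • A) = g • F A := by
    intro g A hA
    obtain ⟨v, w, h⟩ := hH.exists_isEdge A hA
    refine (hF _ _ _ (h.smul hG g)).unique ?_
    have := isGreatest_separators_smul hG (hF A v w h) g
    rwa [show g • z A • w = z (g • A) • g • w by rw [hsmul g A hA]; simp only [smul_smul]; group]
      at this
  have hstab : ∀ A ∈ H, MulAction.stabilizer G (F A) = MulAction.stabilizer G A := by
    intro A hA
    have := hfin _ (hFmem A hA)
    refine (Subgroup.eq_of_le_of_card_ge (fun g hg => ?_) ?_).symm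
    · rw [MulAction.mem_stabilizer_iff, ← hFsmul g A hA, MulAction.mem_stabilizer_iff.1 hg]
    · exact (card_stabilizer_of_mem_unorientedOrbit (horb A hA _ (hFmem A hA))).le
  refine hH.twist_injective hG hcompl hindist hedge hF (fun A B v w w' hA hB hAB => ?_) hψ
  obtain ⟨g, rfl | rfl⟩ := horb A hA.mem B hB.mem
  · rw [hFsmul g A hA.mem] at hAB
    have hg : g ∈ MulAction.stabilizer G A := hstab A hA.mem ▸ hAB.symm
    exact (MulAction.mem_stabilizer_iff.1 hg).symm
  · have hA' := hH.compl_mem A hA.mem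
    rw [hFsmul g _ hA'] at hAB
    have hg := mem_normalizer_of_smul_eq hAB.symm
      (by rw [hstab _ hA', hstab _ hA.mem, stabilizer_compl])
    rw [hstab A hA.mem] at hg
    have hgw := (hH.isEdge_unique hB ((hH.isEdge_compl hA).smul hG g)).1
    refine absurd ⟨A, v, w, hA, g⁻¹, Subgroup.inv_mem _ hg, ?_⟩ hfold
    simpa using hgw.smul hG g⁻¹

end NotFolded

end Folding

section Rigidity

variable {V : Type*} {H : Set (Set V)} {A B : Set V} {v w : V} {G : Type*} [Group G]
  [MulAction G V]

lemma exists_pow_mem_centralizer {K : Subgroup G} [Finite K] {n : G}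
    (hn : n ∈ Subgroup.normalizer (K : Set G)) :
    ∃ k, 0 < k ∧ n ^ k ∈ Subgroup.centralizer (K : Set G) := by
  have hfin : Finite (MulAut K) := Finite.of_injective _ DFunLike.coe_injective
  obtain ⟨k, hk, h⟩ := isOfFinOrder_iff_pow_eq_one.1
    (isOfFinOrder_of_finite (K.normalizerMonoidHom ⟨n, hn⟩))
  refine ⟨k, hk, ?_⟩
  rw [← map_pow, ← MonoidHom.mem_ker, Subgroup.normalizerMonoidHom_ker] at h
  exact Subgroup.mem_subgroupOf.1 h

lemma exists_equivariant_label {X : Type*} [Group X] (ρ : G →* MulAut X) {t : X}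
    (horb : ∀ B ∈ H, B ∈ unorientedOrbit G A) (hinv : ∀ g : G, g • A ≠ Aᶜ)
    (ht : ∀ g ∈ MulAction.stabilizer G A, ρ g t = t) :
    ∃ z : Set V → X, z A = t ∧ (∀ B ∈ H, z Bᶜ = (z B)⁻¹) ∧
      ∀ g : G, ∀ B ∈ H, z (g • B) = ρ g (z B) := by
  classical
  let z : Set V → X := fun B =>
    if h : ∃ g : G, B = g • A then ρ h.choose t
    else if h : ∃ g : G, B = g • Aᶜ then (ρ h.choose t)⁻¹ else 1
  have hcongr : ∀ g h : G, g • A = h • A → ρ g t = ρ h t := by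
    intro g h hgh
    have := ht (h⁻¹ * g) (by rw [MulAction.mem_stabilizer_iff, mul_smul, hgh, inv_smul_smul])
    rwa [map_mul, map_inv, MulAut.mul_apply, MulAut.inv_apply, MulEquiv.symm_apply_eq] at this
  have hpos : ∀ g : G, z (g • A) = ρ g t := by
    intro g
    have h : ∃ k : G, g • A = k • A := ⟨g, rfl⟩
    simp only [z, dif_pos h]
    exact hcongr _ _ h.choose_spec.symm
  have hneg : ∀ g : G, z (g • A)ᶜ = (ρ g t)⁻¹ := by
    intro g
    have h : ∃ k : G, (g • A)ᶜ = k • Aᶜ := ⟨g, Set.smul_set_compl.symm⟩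
    have h' : ¬ ∃ k : G, (g • A)ᶜ = k • A := fun ⟨k, hk⟩ => hinv (g⁻¹ * k) <| by
      rw [mul_smul, ← hk, ← Set.smul_set_compl, inv_smul_smul]
    simp only [z, dif_neg h', dif_pos h]
    have hk := h.choose_spec
    rw [Set.smul_set_compl, compl_inj_iff] at hk
    rw [hcongr _ _ hk]
  refine ⟨z, by simpa using hpos 1, fun B hB => ?_, fun g B hB => ?_⟩
  · obtain ⟨g, rfl | rfl⟩ := horb B hB
    · rw [hpos, hneg]
    · rw [Set.smul_set_compl, _root_.compl_compl, hpos, hneg, inv_inv]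
  · obtain ⟨k, rfl | rfl⟩ := horb B hB
    · rw [smul_smul, hpos, hpos, map_mul, MulAut.mul_apply]
    · rw [smul_smul, Set.smul_set_compl, Set.smul_set_compl, hneg, hneg, map_mul, MulAut.mul_apply,
        map_inv]

lemma IsHalfSpaceSystem.label_eq (hH : IsHalfSpaceSystem H) {X : Type*} [Group X] {z z' : Set V → X}
    (horb : ∀ B ∈ H, B ∈ unorientedOrbit G A) (hA : A ∈ H) (hAz : z A = z' A)
    (hcompl : ∀ B ∈ H, z Bᶜ = (z B)⁻¹) (hsmul : ∀ g : G, ∀ B ∈ H, z (g • B) = z B)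
    (hcompl' : ∀ B ∈ H, z' Bᶜ = (z' B)⁻¹) (hsmul' : ∀ g : G, ∀ B ∈ H, z' (g • B) = z' B) :
    ∀ B ∈ H, z B = z' B := by
  intro B hB
  obtain ⟨g, rfl | rfl⟩ := horb B hB
  · rw [hsmul g A hA, hsmul' g A hA, hAz]
  · rw [hsmul g _ (hH.compl_mem A hA), hsmul' g _ (hH.compl_mem A hA), hcompl A hA, hcompl' A hA,
      hAz]

lemma IsHalfSpaceSystem.pow_smul_mem (hH : IsHalfSpaceSystem H)
    (hG : ∀ g : G, ∀ A ∈ H, g • A ∈ H) (h : IsEdge H A v w) {n : G} (hn : Indist H (n • v) w)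
    (hinv : n • A ≠ Aᶜ) (k : ℕ) : n ^ k • w ∈ A := by
  have hsub : n • A ⊆ A := by
    have hout := hH.isGreatest_of_isEdge (h.smul hG n) (h.smul hG n).right_mem
    have hback := (hH.isEdge_compl h).of_indist hn.symm fun _ _ => Iff.rfl
    have := (hH.eq_or_subset_compl (hH.isGreatest_of_isEdge hback hback.right_mem) hout)
    rw [_root_.compl_compl] at this
    exact this.resolve_left fun h => hinv h.symm
  induction k with
  | zero => simpa using h.right_mem
  | succ k ih =>
    rw [pow_succ', mul_smul]
    exact hsub (Set.smul_mem_smul_set ih)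

lemma IsHalfSpaceSystem.smul_mem_of_equivariant (hH : IsHalfSpaceSystem H)
    (hG : ∀ g : G, ∀ A ∈ H, g • A ∈ H) {z : Set V → G}
    (hsmul : ∀ g : G, ∀ A ∈ H, z (g • A) = g * z A * g⁻¹) (h : IsEdge H A v w)
    (hmem : z A • w ∈ A) (g : G) {p q : V} (hpq : IsEdge H (g • A) p q) :
    z (g • A) • q ∈ g • A := by
  have hq := (hH.isEdge_unique hpq (h.smul hG g)).2
  refine ((hq.smul hG (z (g • A))) _ (hG g A h.mem)).2 ?_
  rw [hsmul g A h.mem, smul_smul, inv_mul_cancel_right, mul_smul]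
  exact Set.smul_mem_smul_set hmem

lemma IsHalfSpaceSystem.character_twist (hH : IsHalfSpaceSystem H) {X : Type*}
    [CommGroup X] [Nonempty V] {z : Set V → G} {η : V → G}
    {z' : Set V → X} {θ : V → X} {ψ : G →* G} {χ : G →* X} {k : ℕ}
    (hη : ∀ v w, Indist H v w → η v = η w) (hηe : ∀ A v w, IsEdge H A v w → η w = η v * z A)
    (hηs : ∀ g v, η (g • v) * g = ψ g * η v)
    (hθ : ∀ v w, Indist H v w → θ v = θ w) (hθe : ∀ A v w, IsEdge H A v w → θ w = θ v * z' A)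
    (hθs : ∀ g v, θ (g • v) = χ g * θ v) (hz : ∀ A ∈ H, χ (z A) = z' A ^ k) (g : G) :
    χ (ψ g) = χ g ^ (k + 1) := by
  have hconst : ∀ v w, χ (η v) / θ v ^ k = χ (η w) / θ w ^ k := by
    refine hH.eq_of_forall_isEdge (fun v w h => by rw [hη v w h, hθ v w h]) fun A v w h => ?_
    rw [hηe A v w h, hθe A v w h, map_mul, hz A h.mem, mul_pow, mul_div_mul_right_eq_div]
  let o : V := Classical.arbitrary V
  have hψ := congrArg χ (hηs g o)
  have ho := hconst (g • o) o
  rw [map_mul, map_mul] at hψ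
  rw [hθs, mul_pow, div_eq_div_iff_mul_eq_mul, mul_comm (χ g ^ k), ← mul_assoc,
    mul_right_comm, mul_left_inj] at ho
  refine mul_right_cancel (b := χ (η o)) ?_
  rw [← hψ, ho, pow_succ]
  ac_rfl

lemma IsHalfSpaceSystem.twist_injective_of_indist_smul (hH : IsHalfSpaceSystem H)
    (hG : ∀ g : G, ∀ A ∈ H, g • A ∈ H) (horb : ∀ B ∈ H, B ∈ unorientedOrbit G A)
    (hinv : ∀ g : G, ∀ A ∈ H, g • A ≠ Aᶜ) [Nonempty V] (h : IsEdge H A v w) {n : G}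
    (hnv : Indist H (n • v) w) {k : ℕ} {z : Set V → G} (hz : z A = n ^ k)
    (hcompl : ∀ A ∈ H, z Aᶜ = (z A)⁻¹) (hsmul : ∀ g : G, ∀ A ∈ H, z (g • A) = g * z A * g⁻¹)
    {η : V → G} {ψ : G →* G} (hη : ∀ v w, Indist H v w → η v = η w)
    (hηe : ∀ A v w, IsEdge H A v w → η w = η v * z A)
    (hηs : ∀ g v, η (g • v) * g = ψ g * η v) : Function.Injective ψ := by
  have hA' := hH.isEdge_compl h
  have hnw : Indist H (n⁻¹ • w) v := by simpa using hnv.symm.smul hG n⁻¹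
  refine hH.twist_injective hG hcompl hη hηe (F := id)
    (fun B p q hB => hH.isGreatest_of_isEdge hB ?_) (fun _ _ _ _ _ _ _ hAB => hAB) hηs
  obtain ⟨g, rfl | rfl⟩ := horb B hB.mem
  · refine hH.smul_mem_of_equivariant hG hsmul h ?_ g hB
    exact hz ▸ hH.pow_smul_mem hG h hnv (hinv n A h.mem) k
  · refine hH.smul_mem_of_equivariant hG hsmul hA' ?_ g hB
    rw [hcompl A h.mem, hz, ← inv_pow]
    exact hH.pow_smul_mem hG hA' hnw (hinv _ _ hA'.mem) k

section SingleOrbit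

variable (hG' : CoHopfian G) (hH : IsHalfSpaceSystem H) (hG : ∀ g : G, ∀ A ∈ H, g • A ∈ H)
  (horb : ∀ A ∈ H, ∀ B ∈ H, B ∈ unorientedOrbit G A)
  (hfin : ∀ A ∈ H, Finite (MulAction.stabilizer G A)) (hinv : ∀ g : G, ∀ A ∈ H, g • A ≠ Aᶜ)
include hG' hH hG horb hfin hinv

-- If `n` folds the edge `A`, then twisting by `n ^ k` along `A`, where `n ^ k` centralizes the
-- edge stabilizer, is injective; but modulo commutators it is multiplication by `k + 1`.
lemma CoHopfian.not_isFolded [Nonempty V] : ¬ IsFolded G H := by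
  rintro ⟨A, v, w, h, n, hn, hnv⟩
  have := hfin A h.mem
  obtain ⟨k, hk, hcent⟩ := exists_pow_mem_centralizer hn
  obtain ⟨z, hz, hcompl, hsmul⟩ := exists_equivariant_label MulAut.conj (horb A h.mem)
    (fun g => hinv g A h.mem) (t := n ^ k) fun g hg => by
      rw [MulAut.conj_apply, Subgroup.mem_centralizer_iff.1 hcent g hg, mul_inv_cancel_right]
  obtain ⟨z', hz', hcompl', hsmul'⟩ := exists_equivariant_label 1 (horb A h.mem)
    (fun g => hinv g A h.mem) (t := Multiplicative.ofAdd (1 : ℤ)) fun _ _ => rfl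
  obtain ⟨η, ψ, hη, hηe, hηs⟩ := hH.exists_twist hG hcompl hsmul
  obtain ⟨θ, χ, hθ, hθe, hθs⟩ := hH.exists_character hG hcompl' hsmul'
  have hψ : Function.Surjective ψ := hG' ψ (hH.twist_injective_of_indist_smul hG (horb A h.mem)
    hinv h hnv hz hcompl hsmul hη hηe hηs)
  have hχn : χ n = Multiplicative.ofAdd 1 := by
    have := hθs n v
    rw [hθ _ _ hnv, hθe A v w h, hz', mul_comm] at this
    exact (mul_right_cancel this).symm
  have hχz : ∀ B ∈ H, χ (z B) = z' B ^ k := by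
    refine hH.label_eq (G := G) (z := χ ∘ z) (z' := fun B => z' B ^ k) (horb A h.mem) h.mem ?_
      (fun B hB => ?_) (fun g B hB => ?_) (fun B hB => ?_) fun g B hB => ?_
    · simp only [Function.comp_apply, hz, hz', map_pow, hχn]
    · simp only [Function.comp_apply, hcompl B hB, map_inv]
    · simp only [Function.comp_apply, hsmul g B hB, MulAut.conj_apply, map_mul, map_inv,
        mul_inv_cancel_comm]
    · simp only [hcompl' B hB, inv_pow]
    · exact congrArg (· ^ k) (hsmul' g B hB)
  obtain ⟨g, hg⟩ := hψ n
  have := hH.character_twist hη hηe hηs hθ hθe hθs hχz g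
  rw [hg, hχn] at this
  have h1 : (1 : ℤ) = (k + 1 : ℕ) * Multiplicative.toAdd (χ g) := by
    simpa using congrArg Multiplicative.toAdd this
  have := Int.le_of_dvd one_pos ⟨_, h1⟩
  omega

lemma CoHopfian.twist_bijective [Nonempty V] {z : Set V → G}
    (hcompl : ∀ A ∈ H, z Aᶜ = (z A)⁻¹) (hsmul : ∀ g : G, ∀ A ∈ H, z (g • A) = g * z A * g⁻¹)
    {η : V → G} {ψ : G →* G} (hη : ∀ v w, Indist H v w → η v = η w)
    (hηe : ∀ A v w, IsEdge H A v w → η w = η v * z A)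
    (hηs : ∀ g v, η (g • v) * g = ψ g * η v) : Function.Bijective ψ := by
  have hinj := hH.twist_injective_of_not_isFolded hG horb hfin
    (hG'.not_isFolded hH hG horb hfin hinv) hcompl hsmul hη hηe hηs
  exact ⟨hinj, hG' ψ hinj⟩

end SingleOrbit

section Untwisting

variable (hG' : CoHopfian G) (hH : IsHalfSpaceSystem H) (hG : ∀ g : G, ∀ A ∈ H, g • A ∈ H)
  (hfin : ∀ A ∈ H, Finite (MulAction.stabilizer G A)) (hinv : ∀ g : G, ∀ A ∈ H, g • A ≠ Aᶜ)
  (hsep : ∀ v w, Indist H v w → v = w)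
include hH hG hsep

lemma IsHalfSpaceSystem.exists_jump {φ : G →* G} {γ : V → G}
    (hγ : ∀ g v, γ (g • v) = φ g * γ v * g⁻¹) :
    ∃ z : Set V → G, (∀ A v w, IsEdge H A v w → z A = (γ v)⁻¹ * γ w) ∧
      (∀ A ∈ H, z Aᶜ = (z A)⁻¹) ∧ ∀ g : G, ∀ A ∈ H, z (g • A) = g * z A * g⁻¹ := by
  have hex : ∀ A, ∃ x, ∀ v w, IsEdge H A v w → x = (γ v)⁻¹ * γ w := by
    intro A
    by_cases h : ∃ v w, IsEdge H A v w
    · obtain ⟨v, w, h⟩ := h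
      refine ⟨(γ v)⁻¹ * γ w, fun v' w' h' => ?_⟩
      rw [hsep _ _ (hH.isEdge_unique h h').1, hsep _ _ (hH.isEdge_unique h h').2]
    · exact ⟨1, fun v w hA => absurd ⟨v, w, hA⟩ h⟩
  choose z hz using hex
  refine ⟨z, hz, fun A hA => ?_, fun g A hA => ?_⟩ <;> obtain ⟨v, w, h⟩ := hH.exists_isEdge A hA
  · rw [hz A v w h, hz _ w v (hH.isEdge_compl h), mul_inv_rev, inv_inv]
  · rw [hz A v w h, hz _ _ _ (h.smul hG g), hγ, hγ]
    group

include hG' hfin hinv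

-- Collapsing all edges outside the orbit of `B` leaves a tree with a single orbit of edges, whose
-- twist by the jumps of `γ` is bijective; dividing by it makes `γ` constant along these edges.
lemma CoHopfian.exists_untwist [Nonempty V] (hB : B ∈ H) {φ : G →* G} {γ : V → G}
    (hγ : ∀ g v, γ (g • v) = φ g * γ v * g⁻¹) :
    ∃ (ψ : G ≃* G) (γ' : V → G), (∀ g v, γ' (g • v) = ψ (φ g) * γ' v * g⁻¹) ∧
      ∀ A v w, IsEdge H A v w → A ∈ unorientedOrbit G B ∨ γ v = γ w → γ' v = γ' w := by
  have hsub : unorientedOrbit G B ⊆ H := by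
    rintro _ ⟨g, rfl | rfl⟩
    exacts [hG g B hB, hG g _ (hH.compl_mem B hB)]
  have hO : IsHalfSpaceSystem (unorientedOrbit G B) :=
    hH.mono hsub fun _ => compl_mem_unorientedOrbit
  have hOG : ∀ g : G, ∀ A ∈ unorientedOrbit G B, g • A ∈ unorientedOrbit G B :=
    fun g _ => smul_mem_unorientedOrbit g
  obtain ⟨z, hz, hcompl, hsmul⟩ := hH.exists_jump hG hsep hγ
  replace hcompl := fun A hA => hcompl A (hsub hA)
  replace hsmul := fun g A hA => hsmul g A (hsub hA)
  obtain ⟨η, ψ, hη, hηe, hηs⟩ := hO.exists_twist hOG hcompl hsmul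
  have hψ : Function.Bijective ψ := hG'.twist_bijective hO hOG
    (fun A hA C hC => mem_unorientedOrbit_trans (mem_unorientedOrbit_comm hA) hC)
    (fun A hA => hfin A (hsub hA)) (fun g A hA => hinv g A (hsub hA)) hcompl hsmul hη hηe hηs
  let e : G ≃* G := MulEquiv.ofBijective ψ hψ
  refine ⟨e.symm, fun v => e.symm (γ v * (η v)⁻¹), fun g v => ?_, fun A v w h hA => ?_⟩
  · rw [MulEquiv.symm_apply_eq]
    simp only [map_mul, MulEquiv.apply_symm_apply]
    rw [show e g⁻¹ = (ψ g)⁻¹ from map_inv ψ g, hγ, eq_mul_inv_of_mul_eq (hηs g v)]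
    group
  · refine congrArg e.symm ?_
    by_cases hAO : A ∈ unorientedOrbit G B
    · rw [hηe A v w (h.mono hsub hAO), hz A v w h]
      group
    · rw [hA.resolve_left hAO, hη v w (h.indist_of_notMem hsub hAO fun h' =>
        hAO (_root_.compl_compl A ▸ compl_mem_unorientedOrbit h'))]

lemma CoHopfian.bijective_of_equivariant [Nonempty V] (R : Finset (Set V)) (hR : ∀ B ∈ R, B ∈ H)
    {φ : G →* G} {γ : V → G} (hγ : ∀ g v, γ (g • v) = φ g * γ v * g⁻¹)
    (hγR : ∀ A v w, IsEdge H A v w → γ v ≠ γ w → ∃ B ∈ R, A ∈ unorientedOrbit G B) :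
    Function.Bijective φ := by
  classical
  induction R using Finset.induction_on generalizing φ γ with
  | empty =>
    have hconst : ∀ v w, γ v = γ w := by
      refine hH.eq_of_forall_isEdge (fun v w h => congrArg γ (hsep v w h)) fun A v w h => ?_
      by_contra hne
      simpa using hγR A v w h hne
    let o : V := Classical.arbitrary V
    have hφ : φ = (MulAut.conj (γ o)).toMonoidHom := by
      ext g
      have := hγ g o
      rw [hconst (g • o) o] at this
      exact eq_mul_inv_of_mul_eq (mul_inv_eq_iff_eq_mul.1 this.symm)
    exact hφ ▸ (MulAut.conj (γ o)).bijective
  | insert B R _ ih =>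
    obtain ⟨ψ, γ', hγ', hjump⟩ :=
      hG'.exists_untwist hH hG hfin hinv hsep (hR B (Finset.mem_insert_self B R)) hγ
    have := ih (fun C hC => hR C (Finset.mem_insert_of_mem hC))
      (φ := ψ.toMonoidHom.comp φ) (γ := γ') hγ' fun A v w h hne => ?_
    · exact (Function.Bijective.of_comp_iff' ψ.bijective φ).1 this
    have hAB : A ∉ unorientedOrbit G B := fun hA => hne (hjump A v w h (Or.inl hA))
    obtain ⟨C, hC, hA⟩ := hγR A v w h fun heq => hne (hjump A v w h (Or.inr heq))
    obtain rfl | hC := Finset.mem_insert.1 hC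
    exacts [absurd hA hAB, ⟨C, hC, hA⟩]

end Untwisting

lemma exists_equivariant_map {φ : G →* G}
    (hφ : ∀ v : V, ∃ c, ∀ g ∈ MulAction.stabilizer G v, φ g = c * g * c⁻¹) :
    ∃ γ : V → G, ∀ g v, γ (g • v) = φ g * γ v * g⁻¹ := by
  choose c hc using hφ
  let r : V → V := fun v => (Quotient.mk (MulAction.orbitRel G V) v).out
  have hr : ∀ v, ∃ g : G, g • r v = v := fun v =>
    MulAction.orbitRel_apply.1 ((MulAction.orbitRel G V).symm (Quotient.mk_out v))
  have hrg : ∀ (g : G) (v : V), r (g • v) = r v := fun g v =>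
    congrArg Quotient.out (Quotient.sound (MulAction.orbitRel_apply.2 ⟨g, rfl⟩))
  choose t ht using hr
  refine ⟨fun v => φ (t v) * c (r v) * (t v)⁻¹, fun g v => ?_⟩
  have hs : (t v)⁻¹ * g⁻¹ * t (g • v) ∈ MulAction.stabilizer G (r v) := by
    rw [MulAction.mem_stabilizer_iff, mul_smul, ← hrg g v, ht, mul_smul, inv_smul_smul,
      inv_smul_eq_iff, hrg, ht]
  have := hc _ _ hs
  simp only [map_mul, map_inv] at this
  simp only [hrg]
  rw [show φ (t (g • v)) = φ g * φ (t v) * ((φ (t v))⁻¹ * (φ g)⁻¹ * φ (t (g • v))) by group, this]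
  group

theorem CoHopfian.bijective_of_conj_on_stabilizers (hG' : CoHopfian G) (hH : IsHalfSpaceSystem H)
    (hG : ∀ g : G, ∀ A ∈ H, g • A ∈ H) (hfin : ∀ A ∈ H, Finite (MulAction.stabilizer G A))
    (hinv : ∀ g : G, ∀ A ∈ H, g • A ≠ Aᶜ) (hsep : ∀ v w, Indist H v w → v = w) [Nonempty V]
    (R : Finset (Set V)) (hR : ∀ B ∈ R, B ∈ H) (hHR : ∀ A ∈ H, ∃ B ∈ R, A ∈ unorientedOrbit G B)
    {φ : G →* G} (hφ : ∀ v : V, ∃ c, ∀ g ∈ MulAction.stabilizer G v, φ g = c * g * c⁻¹) :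
    Function.Bijective φ := by
  obtain ⟨γ, hγ⟩ := exists_equivariant_map hφ
  exact hG'.bijective_of_equivariant hH hG hfin hinv hsep R hR hγ fun A _ _ h _ => hHR A h.mem

end Rigidity

section CutSystems

variable {G : Type*} [Group G] {E : Set (Set G)} {A B C : Set G} {U : Set (Set G)} {g h : G}

/-- `C` contains the end of `G` at which the powers of `h` accumulate. -/
def ContainsEnd (C : Set G) (h : G) : Prop := ∀ᶠ n : ℕ in Filter.atTop, h ^ n ∈ C

/-- `C` separates the two ends of the cyclic group generated by `h`. -/
def SeparatesEnds (C : Set G) (h : G) : Prop := ContainsEnd C h ∧ ContainsEnd Cᶜ h⁻¹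

lemma SeparatesEnds.compl (hC : SeparatesEnds C h) : SeparatesEnds Cᶜ h⁻¹ :=
  ⟨hC.2, by rw [_root_.compl_compl, inv_inv]; exact hC.1⟩

/-- An invariant nested family of cuts of `G`, with finitely many orbits and finite stabilizers.
It is dual to a tree on which `G` acts. -/
structure IsCutSystem (E : Set (Set G)) : Prop where
  smul_mem : ∀ (g : G), ∀ A ∈ E, g • A ∈ E
  compl_mem : ∀ A ∈ E, Aᶜ ∈ E
  nested : ∀ A ∈ E, ∀ B ∈ E, Nested A B
  finite_separators : ∀ x y, (separators E x y).Finite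
  nonempty : ∀ A ∈ E, A.Nonempty
  finite_stabilizer : ∀ A ∈ E, Finite (MulAction.stabilizer G A)
  exists_reps : ∃ R : Finset (Set G), (∀ B ∈ R, B ∈ E) ∧ ∀ A ∈ E, ∃ B ∈ R, ∃ g : G, A = g • B

/-- A vertex of the tree dual to a nested family `E` of cuts, given as a consistent choice of one
of `A`, `Aᶜ` for all but possibly one pair of complementary cuts. The choices missing a pair are the
midpoints of the edges: the tree is subdivided in order that no edge is inverted. -/
structure IsVertex (E : Set (Set G)) (U : Set (Set G)) : Prop where
  subset : U ⊆ E
  mem_of_subset : ∀ A ∈ U, ∀ B ∈ E, A ⊆ B → B ∈ U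
  compl_notMem : ∀ A ∈ U, Aᶜ ∉ U
  eq_or_eq_compl : ∀ A ∈ E, ∀ B ∈ E, A ∉ U → Aᶜ ∉ U → B ∉ U → Bᶜ ∉ U → B = A ∨ B = Aᶜ
  finite_one_notMem : {A ∈ U | (1 : G) ∉ A}.Finite

lemma IsVertex.finite_ne_one (hU : IsVertex E U) : {A ∈ E | ¬ (A ∈ U ↔ (1 : G) ∈ A)}.Finite := by
  have hmiss : {A ∈ E | A ∉ U ∧ Aᶜ ∉ U}.Finite := by
    rcases Set.eq_empty_or_nonempty {A ∈ E | A ∉ U ∧ Aᶜ ∉ U} with h | ⟨B, hB, hBU, hBU'⟩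
    · exact h ▸ Set.finite_empty
    · exact (Set.toFinite {B, Bᶜ}).subset fun A ⟨hA, hAU, hAU'⟩ =>
        hU.eq_or_eq_compl B hB A hA hBU hBU' hAU hAU'
  refine ((hU.finite_one_notMem.union (hU.finite_one_notMem.image compl)).union hmiss).subset ?_
  rintro A ⟨hA, h⟩
  by_cases hAU : A ∈ U
  · exact Or.inl (Or.inl ⟨hAU, fun h1 => h (iff_of_true hAU h1)⟩)
  by_cases hAU' : Aᶜ ∈ U
  · exact Or.inl (Or.inr ⟨Aᶜ, ⟨hAU', fun h1 => h (iff_of_false hAU h1)⟩, _root_.compl_compl A⟩)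
  · exact Or.inr ⟨hA, hAU, hAU'⟩

namespace IsCutSystem

variable (hE : IsCutSystem E)
include hE

lemma smul_mem_iff : g • A ∈ E ↔ A ∈ E :=
  ⟨fun h => inv_smul_smul g A ▸ hE.smul_mem g⁻¹ _ h, hE.smul_mem g A⟩

lemma isVertex_smul (g : G) (hU : IsVertex E U) : IsVertex E (g • U) where
  subset := fun A hA => hE.smul_mem_iff.1 (hU.subset (Set.mem_smul_set_iff_inv_smul_mem.1 hA))
  mem_of_subset := fun A hA B hB hAB => by
    rw [Set.mem_smul_set_iff_inv_smul_mem] at hA ⊢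
    exact hU.mem_of_subset _ hA _ (hE.smul_mem _ B hB) (Set.smul_set_mono hAB)
  compl_notMem := fun A hA => by
    rw [Set.mem_smul_set_iff_inv_smul_mem] at hA ⊢
    exact Set.smul_set_compl (a := g⁻¹) (s := A) ▸ hU.compl_notMem _ hA
  eq_or_eq_compl := fun A hA B hB h₁ h₂ h₃ h₄ => by
    simp only [Set.mem_smul_set_iff_inv_smul_mem, Set.smul_set_compl] at h₁ h₂ h₃ h₄
    simpa [← Set.smul_set_compl] using
      hU.eq_or_eq_compl _ (hE.smul_mem g⁻¹ A hA) _ (hE.smul_mem g⁻¹ B hB) h₁ h₂ h₃ h₄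
  finite_one_notMem := by
    refine ((hU.finite_one_notMem.union (hE.finite_separators g⁻¹ 1)).image (g • ·)).subset ?_
    rintro A ⟨hA, h1⟩
    rw [Set.mem_smul_set_iff_inv_smul_mem] at hA
    refine ⟨g⁻¹ • A, ?_, smul_inv_smul g A⟩
    by_cases h : (1 : G) ∈ g⁻¹ • A
    · refine Or.inr ⟨hU.subset hA, ?_, h⟩
      rwa [Set.mem_inv_smul_set_iff, smul_eq_mul, mul_inv_cancel]
    · exact Or.inl ⟨hA, h⟩

end IsCutSystem

/-- The midpoint of the edge dual to the cut `A`. -/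
def edgeMidpoint (E : Set (Set G)) (A : Set G) : Set (Set G) := {B ∈ E | A ⊂ B ∨ Aᶜ ⊂ B}

namespace IsCutSystem

variable (hE : IsCutSystem E)
include hE

lemma mem_midpoint_or_compl_mem (hA : A ∈ E) (hB : B ∈ E) (h : B ≠ A) (h' : B ≠ Aᶜ) :
    B ∈ edgeMidpoint E A ∨ Bᶜ ∈ edgeMidpoint E A := by
  have hB' := hE.compl_mem B hB
  have hne : A ≠ Bᶜ := fun hAB => h' (by rw [hAB, _root_.compl_compl])
  rcases hE.nested A hA B hB with hAB | hAB | hAB | hAB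
  · exact Or.inl ⟨hB, Or.inl (hAB.ssubset_of_ne h.symm)⟩
  · exact Or.inr ⟨hB', Or.inr ((Set.compl_subset_compl.2 hAB).ssubset_of_ne
      fun heq => h (compl_injective heq).symm)⟩
  · exact Or.inr ⟨hB', Or.inl (hAB.ssubset_of_ne hne)⟩
  · exact Or.inl ⟨hB, Or.inr (hAB.ssubset_of_ne h'.symm)⟩

lemma isVertex_midpoint (hA : A ∈ E) : IsVertex E (edgeMidpoint E A) := by
  obtain ⟨x, hx⟩ := hE.nonempty A hA
  obtain ⟨y, hy⟩ := hE.nonempty Aᶜ (hE.compl_mem A hA)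
  refine ⟨fun B hB => hB.1, fun B hB C hC hBC => ⟨hC, ?_⟩, ?_, fun B hB C hC hB₁ hB₂ hC₁ hC₂ => ?_,
    ((hE.finite_separators 1 x).union (hE.finite_separators 1 y)).subset ?_⟩
  · exact hB.2.imp (·.trans_subset hBC) (·.trans_subset hBC)
  · rintro B ⟨-, h | h⟩ ⟨-, h' | h'⟩
    · exact h'.1 hx (h.1 hx)
    · exact h.2 (Set.compl_subset_compl.1 h'.1)
    · exact h'.2 (Set.compl_subset_comm.1 h.1)
    · exact h'.1 hy (h.1 hy)
  · have key : ∀ D ∈ E, D ∉ edgeMidpoint E A → Dᶜ ∉ edgeMidpoint E A → D = A ∨ D = Aᶜ :=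
      fun D hD h₁ h₂ => by
        by_contra! h
        exact (hE.mem_midpoint_or_compl_mem hA hD h.1 h.2).elim h₁ h₂
    rcases key B hB hB₁ hB₂ with rfl | rfl
    · exact key C hC hC₁ hC₂
    · rw [_root_.compl_compl]
      exact (key C hC hC₁ hC₂).symm
  · rintro B ⟨⟨hB, h | h⟩, h1⟩
    · exact Or.inl ⟨hB, h1, h.1 hx⟩
    · exact Or.inr ⟨hB, h1, h.1 hy⟩

lemma isVertex_insert_midpoint (hA : A ∈ E) : IsVertex E (insert A (edgeMidpoint E A)) := by
  have hmid := hE.isVertex_midpoint hA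
  have hAmid : Aᶜ ∉ edgeMidpoint E A := by
    rintro ⟨-, h | h⟩
    · obtain ⟨x, hx⟩ := hE.nonempty A hA
      exact h.1 hx hx
    · exact h.ne rfl
  refine ⟨Set.insert_subset hA hmid.subset, ?_, ?_, fun B hB _ _ hB₁ hB₂ => ?_, ?_⟩
  · rintro B (rfl | hB) C hC hBC
    · rcases eq_or_ne C B with rfl | hne
      · exact Set.mem_insert C _
      · exact Or.inr ⟨hC, Or.inl (hBC.ssubset_of_ne hne.symm)⟩
    · exact Or.inr (hmid.mem_of_subset B hB C hC hBC)
  · rintro B (rfl | hB) (h | h)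
    · obtain ⟨x, hx⟩ := hE.nonempty B hA
      exact (h.symm ▸ hx : x ∈ Bᶜ) hx
    · exact hAmid h
    · exact hAmid ((compl_eq_comm.1 h).symm ▸ hB)
    · exact hmid.compl_notMem B hB h
  · simp only [Set.mem_insert_iff, not_or] at hB₁ hB₂
    refine absurd (hE.mem_midpoint_or_compl_mem hA hB hB₁.1 fun h => ?_) (by tauto)
    exact hB₂.1 (by rw [h, _root_.compl_compl])
  · exact (hmid.finite_one_notMem.insert A).subset fun B ⟨hB, h1⟩ => hB.imp id fun hB => ⟨hB, h1⟩

lemma isVertex_one_mem : IsVertex E {A ∈ E | (1 : G) ∈ A} where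
  subset := fun _ hA => hA.1
  mem_of_subset := fun _ hA _ hB hAB => ⟨hB, hAB hA.2⟩
  compl_notMem := fun _ hA hA' => hA'.2 hA.2
  eq_or_eq_compl := fun _ hA _ _ h h' => by
    refine absurd ⟨hE.compl_mem _ hA, fun h1 => h ⟨hA, h1⟩⟩ h'
  finite_one_notMem := Set.finite_empty.subset fun _ hA => hA.2 hA.1.2

omit hE

/-- The vertices of the barycentric subdivision of the tree dual to a cut system. -/
def vertices (hE : IsCutSystem E) : SubMulAction G (Set (Set G)) where
  carrier := {U | IsVertex E U}
  smul_mem' := fun g _ hU => hE.isVertex_smul g hU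

/-- The half-space of the tree dual to `E` towards which the cut `A` points. -/
def halfSpace (hE : IsCutSystem E) (A : Set G) : Set hE.vertices := {U | A ∈ U.1}

/-- The half-spaces of the subdivided tree: the two halves of the edge dual to `A` have the
half-spaces `hE.halfSpace A` and `hE.halfSpace Aᶜ`, up to complements. -/
def halfSpaces (hE : IsCutSystem E) : Set (Set hE.vertices) :=
  {X | ∃ A ∈ E, X = hE.halfSpace A ∨ X = (hE.halfSpace A)ᶜ}

include hE

instance : Nonempty hE.vertices := ⟨⟨_, hE.isVertex_one_mem⟩⟩

lemma smul_halfSpace (g : G) (A : Set G) : g • hE.halfSpace A = hE.halfSpace (g • A) := by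
  ext U
  rw [Set.mem_smul_set_iff_inv_smul_mem]
  change A ∈ g⁻¹ • U.1 ↔ g • A ∈ U.1
  rw [Set.mem_inv_smul_set_iff]

lemma smul_mem_halfSpaces (g : G) : ∀ X ∈ hE.halfSpaces, g • X ∈ hE.halfSpaces := by
  rintro _ ⟨A, hA, rfl | rfl⟩
  · exact ⟨g • A, hE.smul_mem g A hA, Or.inl (hE.smul_halfSpace g A)⟩
  · exact ⟨g • A, hE.smul_mem g A hA, Or.inr (by rw [Set.smul_set_compl, smul_halfSpace])⟩

lemma isEdge_halfSpace (hA : A ∈ E) : IsEdge hE.halfSpaces (hE.halfSpace A)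
    ⟨_, hE.isVertex_midpoint hA⟩ ⟨_, hE.isVertex_insert_midpoint hA⟩ where
  mem := ⟨A, hA, Or.inl rfl⟩
  left_notMem := fun h => h.2.elim (·.ne rfl) fun h => by
    obtain ⟨y, hy⟩ := hE.nonempty Aᶜ (hE.compl_mem A hA)
    exact hy (h.1 hy)
  right_mem := Set.mem_insert A _
  mem_iff := by
    have key : ∀ B, B ≠ A → (B ∈ edgeMidpoint E A ↔ B ∈ insert A (edgeMidpoint E A)) := fun B h =>
      (or_iff_right h).symm
    rintro _ ⟨B, -, rfl | rfl⟩ h₁ h₂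
    · exact key B (by rintro rfl; exact h₁ rfl)
    · exact not_congr (key B (by rintro rfl; exact h₂ rfl))

lemma halfSpace_nested (hA : A ∈ E) (hB : B ∈ E) :
    Nested (hE.halfSpace A) (hE.halfSpace B) := by
  have hnot : ∀ U : hE.vertices, A ∈ U.1 → Aᶜ ∉ U.1 := fun U h => U.2.compl_notMem A h
  rcases eq_or_ne B Aᶜ with rfl | hne'
  · exact Or.inr (Or.inr (Or.inl hnot))
  rcases eq_or_ne B A with rfl | hne
  · exact Or.inl subset_rfl
  rcases hE.nested A hA B hB with h | h | h | h
  · exact Or.inl fun U hU => U.2.mem_of_subset A hU B hB h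
  · exact Or.inr (Or.inl fun U hU => U.2.mem_of_subset B hU A hA h)
  · exact Or.inr (Or.inr (Or.inl fun U hU hBU => U.2.compl_notMem B hBU
      (U.2.mem_of_subset A hU _ (hE.compl_mem B hB) h)))
  · refine Or.inr (Or.inr (Or.inr fun U (hU : A ∉ U.1) => ?_))
    by_contra hBU
    have hAU : Aᶜ ∉ U.1 := fun h' => hBU (U.2.mem_of_subset _ h' B hB h)
    have hBU' : Bᶜ ∉ U.1 := fun h' => hU (U.2.mem_of_subset _ h' A hA (Set.compl_subset_comm.1 h))
    exact (U.2.eq_or_eq_compl A hA B hB hU hAU hBU hBU').elim hne hne'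

lemma isHalfSpaceSystem : IsHalfSpaceSystem hE.halfSpaces where
  compl_mem := by
    rintro _ ⟨A, hA, rfl | rfl⟩
    exacts [⟨A, hA, Or.inr rfl⟩, ⟨A, hA, Or.inl (_root_.compl_compl _)⟩]
  nested := by
    rintro _ ⟨A, hA, rfl | rfl⟩ _ ⟨B, hB, rfl | rfl⟩
    exacts [hE.halfSpace_nested hA hB, (hE.halfSpace_nested hA hB).compl_right,
      (hE.halfSpace_nested hA hB).compl_left, (hE.halfSpace_nested hA hB).compl_left.compl_right]
  finite_separators := fun U U' => by
    have hfin := U.2.finite_ne_one.union U'.2.finite_ne_one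
    refine ((hfin.image hE.halfSpace).union (hfin.image fun A => (hE.halfSpace A)ᶜ)).subset ?_
    have key : ∀ A ∈ E, ¬ (A ∈ U.1 ↔ A ∈ U'.1) →
        A ∈ {A ∈ E | ¬ (A ∈ U.1 ↔ (1 : G) ∈ A)} ∪ {A ∈ E | ¬ (A ∈ U'.1 ↔ (1 : G) ∈ A)} := by
      intro A hA h
      by_cases h' : A ∈ U.1 ↔ (1 : G) ∈ A
      · exact Or.inr ⟨hA, fun h'' => h (h'.trans h''.symm)⟩
      · exact Or.inl ⟨hA, h'⟩
    rintro _ ⟨⟨A, hA, rfl | rfl⟩, h₁, h₂⟩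
    · exact Or.inl ⟨A, key A hA fun h => h₁ (h.2 h₂), rfl⟩
    · exact Or.inr ⟨A, key A hA fun h => h₁ fun h' => h₂ (h.1 h'), rfl⟩
  exists_isEdge := by
    rintro _ ⟨A, hA, rfl | rfl⟩
    · exact ⟨_, _, hE.isEdge_halfSpace hA⟩
    · exact ⟨_, _, (hE.isEdge_halfSpace hA).compl ⟨A, hA, Or.inr rfl⟩⟩

lemma eq_of_indist (U U' : hE.vertices) (h : Indist hE.halfSpaces U U') : U = U' := by
  refine Subtype.ext (Set.ext fun A => ⟨fun hA => ?_, fun hA => ?_⟩)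
  · exact (h _ ⟨A, U.2.subset hA, Or.inl rfl⟩).1 hA
  · exact (h _ ⟨A, U'.2.subset hA, Or.inl rfl⟩).2 hA

lemma halfSpace_injOn : Set.InjOn hE.halfSpace E := by
  intro A hA B _ h
  have hmid := (hE.isEdge_halfSpace hA).left_notMem
  have hterm := (hE.isEdge_halfSpace hA).right_mem
  rw [h] at hmid hterm
  exact (hterm.resolve_right hmid).symm

lemma smul_halfSpace_ne_compl (hA : A ∈ E) : g • hE.halfSpace A ≠ (hE.halfSpace A)ᶜ := by
  intro h
  have hmid := (hE.isEdge_halfSpace hA).left_notMem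
  have hterm := (hE.isEdge_halfSpace hA).right_mem
  rw [← Set.mem_compl_iff, ← h, smul_halfSpace] at hmid
  refine (?_ : _ ∈ (hE.halfSpace A)ᶜ) hterm
  rw [← h, smul_halfSpace]
  exact Or.inr hmid

lemma smul_ne_compl (g : G) : ∀ X ∈ hE.halfSpaces, g • X ≠ Xᶜ := by
  rintro _ ⟨A, hA, rfl | rfl⟩
  · exact hE.smul_halfSpace_ne_compl hA
  · rw [Set.smul_set_compl]
    exact fun h => hE.smul_halfSpace_ne_compl hA (compl_injective h)

lemma finite_stabilizer_halfSpace : ∀ X ∈ hE.halfSpaces, Finite (MulAction.stabilizer G X) := by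
  have key : ∀ A ∈ E, Finite (MulAction.stabilizer G (hE.halfSpace A)) := fun A hA => by
    have := hE.finite_stabilizer A hA
    refine Finite.Set.subset (MulAction.stabilizer G A : Set G) fun g hg => ?_
    have hg : g • hE.halfSpace A = hE.halfSpace A := hg
    rw [smul_halfSpace] at hg
    exact hE.halfSpace_injOn (hE.smul_mem g A hA) hA hg
  rintro _ ⟨A, hA, rfl | rfl⟩
  · exact key A hA
  · rw [stabilizer_compl]
    exact key A hA

lemma exists_reps_halfSpaces : ∃ R : Finset (Set hE.vertices), (∀ X ∈ R, X ∈ hE.halfSpaces) ∧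
    ∀ X ∈ hE.halfSpaces, ∃ Y ∈ R, X ∈ unorientedOrbit G Y := by
  classical
  obtain ⟨R, hR, hER⟩ := hE.exists_reps
  refine ⟨R.image hE.halfSpace, fun X hX => ?_, ?_⟩
  · obtain ⟨A, hA, rfl⟩ := Finset.mem_image.1 hX
    exact ⟨A, hR A hA, Or.inl rfl⟩
  · rintro _ ⟨A, hA, h⟩
    obtain ⟨B, hB, g, rfl⟩ := hER A hA
    refine ⟨_, Finset.mem_image_of_mem _ hB, g, ?_⟩
    rwa [Set.smul_set_compl, smul_halfSpace]

end IsCutSystem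

end CutSystems

section CutSystems

section Weight

variable {X : Type*} {E : Set (Set X)} {A F : Set X}

/-- The cuts in `E` that split the set `F`. -/
def cutsAcross (E : Set (Set X)) (F : Set X) : Set (Set X) :=
  {B ∈ E | (F ∩ B).Nonempty ∧ (F \ B).Nonempty}

/-- A strictly monotone count on the cuts across `F`. The second summand makes it positive exactly
on the sets which meet `F`. -/
noncomputable def weight (E : Set (Set X)) (F A : Set X) : ℕ :=
  {B ∈ cutsAcross E F | B ⊂ A}.ncard + (F ∩ A).ncard

/-- The centre of the finite set `F` in the tree dual to `E`: each cut is oriented towards its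
heavier side. -/
def barycenter (E : Set (Set X)) (F : Set X) : Set (Set X) :=
  {A ∈ E | weight E F Aᶜ < weight E F A}

lemma weight_eq_zero (h : F ∩ A = ∅) : weight E F A = 0 := by
  have : {B ∈ cutsAcross E F | B ⊂ A} = ∅ := by
    refine Set.eq_empty_of_forall_notMem fun B hB => ?_
    exact (hB.1.2.1.mono (Set.inter_subset_inter_right F hB.2.1)).ne_empty h
  simp only [weight, this, h, Set.ncard_empty]

lemma weight_pos (hF : F.Finite) (h : (F ∩ A).Nonempty) : 0 < weight E F A :=
  Nat.add_pos_right _ (h.ncard_pos (hF.inter_of_left A))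

lemma mem_cutsAcross_of_weight_eq (hF : F.Finite) (hF' : F.Nonempty) (hA : A ∈ E)
    (h : weight E F A = weight E F Aᶜ) : A ∈ cutsAcross E F := by
  obtain ⟨x, hx⟩ := hF'
  refine ⟨hA, ?_, ?_⟩ <;> by_contra! hne
  · have hxA : x ∈ F ∩ Aᶜ := ⟨hx, fun hxA => hne.subset ⟨hx, hxA⟩⟩
    have := weight_pos (E := E) hF ⟨x, hxA⟩
    rw [weight_eq_zero hne] at h
    omega
  · have hxA : x ∈ F ∩ A := ⟨hx, by_contra fun hxA => hne.subset ⟨hx, hxA⟩⟩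
    have := weight_pos (E := E) hF ⟨x, hxA⟩
    rw [Set.sdiff_eq] at hne
    rw [weight_eq_zero hne] at h
    omega

end Weight

variable {G : Type*} [Group G] {E : Set (Set G)} {A B F : Set G} {U : Set (Set G)} {g h : G}

/-- A finite family of finite subgroups containing every finite subgroup of `G` up to conjugacy. -/
structure CoversFiniteSubgroups (𝒦 : Set (Subgroup G)) : Prop where
  finite : 𝒦.Finite
  finite_of_mem : ∀ K ∈ 𝒦, Finite K
  exists_conj_mem : ∀ H : Subgroup G, Finite H → ∃ K ∈ 𝒦, ∃ g : G, ∀ h ∈ H, g⁻¹ * h * g ∈ K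

namespace IsCutSystem

variable (hE : IsCutSystem E)
include hE

lemma finite_cutsAcross (hF : F.Finite) : (cutsAcross E F).Finite := by
  refine (hF.biUnion fun x _ => hF.biUnion fun y _ => hE.finite_separators x y).subset ?_
  rintro B ⟨hB, ⟨y, hy, hyB⟩, x, hx, hxB⟩
  exact Set.mem_biUnion hx (Set.mem_biUnion hy ⟨hB, hxB, hyB⟩)

lemma weight_mono (hF : F.Finite) (hAB : A ⊆ B) : weight E F A ≤ weight E F B :=
  add_le_add
    (Set.ncard_le_ncard (fun _ hC => ⟨hC.1, hC.2.trans_subset hAB⟩)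
      ((hE.finite_cutsAcross hF).subset fun _ hC => hC.1))
    (Set.ncard_le_ncard (Set.inter_subset_inter_right F hAB) (hF.inter_of_left B))

lemma weight_lt (hF : F.Finite) (hA : A ∈ cutsAcross E F) (hAB : A ⊂ B) :
    weight E F A < weight E F B := by
  refine add_lt_add_of_lt_of_le (Set.ncard_lt_ncard ?_
    ((hE.finite_cutsAcross hF).subset fun _ hC => hC.1))
    (Set.ncard_le_ncard (Set.inter_subset_inter_right F hAB.1) (hF.inter_of_left B))
  exact ⟨fun C hC => ⟨hC.1, hC.2.trans hAB⟩, fun h => (h ⟨hA, hAB⟩).2.ne rfl⟩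

lemma isVertex_barycenter (hF : F.Finite) (hF' : F.Nonempty) : IsVertex E (barycenter E F) where
  subset := fun A hA => hA.1
  mem_of_subset := fun A hA B hB hAB => ⟨hB,
    (hE.weight_mono hF (Set.compl_subset_compl.2 hAB)).trans_lt
      (hA.2.trans_le (hE.weight_mono hF hAB))⟩
  compl_notMem := fun A hA hA' => by
    have h := hA'.2
    rw [_root_.compl_compl] at h
    exact lt_asymm h hA.2
  eq_or_eq_compl := fun A hA B hB hA₁ hA₂ hB₁ hB₂ => by
    have hbal : ∀ C ∈ E, C ∉ barycenter E F → Cᶜ ∉ barycenter E F →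
        weight E F C = weight E F Cᶜ := fun C hC h₁ h₂ => by
      refine le_antisymm (not_lt.1 fun h => h₁ ⟨hC, h⟩)
        (not_lt.1 fun h => h₂ ⟨hE.compl_mem C hC, ?_⟩)
      rwa [_root_.compl_compl]
    have heq : ∀ C ∈ E, ∀ D, weight E F C = weight E F Cᶜ → weight E F D = weight E F Dᶜ →
        C ⊆ D → C = D := fun C hC D hwC hwD hCD => by
      by_contra hne
      have h₁ := hE.weight_lt hF (mem_cutsAcross_of_weight_eq hF hF' hC hwC)
        (hCD.ssubset_of_ne hne)
      have h₂ := hE.weight_mono hF (Set.compl_subset_compl.2 hCD)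
      omega
    have hwA := hbal A hA hA₁ hA₂
    have hwB := hbal B hB hB₁ hB₂
    have hcompl : ∀ {C : Set G}, weight E F C = weight E F Cᶜ →
        weight E F Cᶜ = weight E F Cᶜᶜ := fun {C} h => by rw [_root_.compl_compl, h]
    rcases hE.nested A hA B hB with h | h | h | h
    · exact Or.inl (heq A hA B hwA hwB h).symm
    · exact Or.inl (heq B hB A hwB hwA h)
    · exact Or.inr (compl_eq_comm.1 (heq A hA Bᶜ hwA (hcompl hwB) h).symm).symm
    · exact Or.inr (heq Aᶜ (hE.compl_mem A hA) B (hcompl hwA) hwB h).symm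
  finite_one_notMem := by
    refine (hF.biUnion fun x _ => hE.finite_separators 1 x).subset ?_
    rintro A ⟨⟨hA, hlt⟩, h1⟩
    rcases Set.eq_empty_or_nonempty (F ∩ A) with h | ⟨x, hx, hxA⟩
    · rw [weight_eq_zero h] at hlt
      exact absurd hlt (Nat.not_lt_zero _)
    · exact Set.mem_biUnion hx ⟨hA, h1, hxA⟩

lemma smul_cutsAcross (g : G) (F : Set G) : g • cutsAcross E F = cutsAcross E (g • F) := by
  ext B
  rw [Set.mem_smul_set_iff_inv_smul_mem]
  have h₁ : F ∩ g⁻¹ • B = g⁻¹ • (g • F ∩ B) := by rw [Set.smul_set_inter, inv_smul_smul]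
  have h₂ : F \ g⁻¹ • B = g⁻¹ • (g • F \ B) := by rw [Set.smul_set_sdiff, inv_smul_smul]
  simp only [cutsAcross, Set.mem_ofPred_eq, hE.smul_mem_iff, h₁, h₂, Set.smul_set_nonempty]

lemma weight_smul (g : G) (F A : Set G) : weight E (g • F) (g • A) = weight E F A := by
  have h : {B ∈ cutsAcross E (g • F) | B ⊂ g • A} = g • {B ∈ cutsAcross E F | B ⊂ A} := by
    ext B
    rw [Set.mem_smul_set_iff_inv_smul_mem]
    refine and_congr ?_ ?_
    · rw [← hE.smul_cutsAcross, Set.mem_smul_set_iff_inv_smul_mem]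
    · rw [ssubset_iff_subset_not_subset, ssubset_iff_subset_not_subset, Set.subset_smul_set_iff,
        Set.smul_set_subset_iff_subset_inv_smul_set (a := g)]
  rw [weight, h, ← Set.smul_set_inter, Set.ncard_smul_set, Set.ncard_smul_set, weight]

lemma smul_barycenter (g : G) (F : Set G) : g • barycenter E F = barycenter E (g • F) := by
  ext A
  rw [Set.mem_smul_set_iff_inv_smul_mem]
  have h : weight E F (g⁻¹ • A) = weight E (g • F) A := by
    rw [← hE.weight_smul g, smul_inv_smul]
  have h' : weight E F (g⁻¹ • A)ᶜ = weight E (g • F) Aᶜ := by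
    rw [← hE.weight_smul g, Set.smul_set_compl, smul_inv_smul]
  simp only [barycenter, Set.mem_ofPred_eq, hE.smul_mem_iff, h, h']

lemma exists_fixed_vertex (K : Subgroup G) [Finite K] :
    ∃ v : hE.vertices, K ≤ MulAction.stabilizer G v := by
  refine ⟨⟨_, hE.isVertex_barycenter (Set.toFinite (K : Set G)) ⟨1, K.one_mem⟩⟩, fun k hk => ?_⟩
  refine Subtype.ext ((hE.smul_barycenter k K).trans ?_)
  rw [smul_coe_set hk]

end IsCutSystem

namespace SeparatesEnds

lemma pow_smul_ne (hA : SeparatesEnds A h) {d : ℕ} (hd : 0 < d) : h ^ d • A ≠ A := by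
  intro hfix
  obtain ⟨m, hm⟩ := Filter.eventually_atTop.1 (hA.1.and hA.2)
  obtain ⟨hA₁, hA₂⟩ := hm (d * m) (Nat.le_mul_of_pos_left m hd)
  have hfix' : (h ^ (d * m)) • A = A := by
    rw [pow_mul]
    exact (MulAction.stabilizer G A).pow_mem hfix m
  have hone : (1 : G) ∈ A := by
    rw [← hfix', Set.mem_smul_set_iff_inv_smul_mem] at hA₁
    simpa using hA₁
  refine hA₂ ?_
  rw [← Set.smul_mem_smul_set_iff (a := h ^ (d * m)), hfix']
  simpa using hone

lemma notMem_of_smul_eq (hA : SeparatesEnds A h) (hU : IsVertex E U) (hfix : h • U = U) :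
    A ∉ U := by
  intro hAU
  obtain ⟨m, hm⟩ := Filter.eventually_atTop.1 hA.2
  have hmem : ∀ n : ℕ, h ^ (m + n) • A ∈ {B ∈ U | (1 : G) ∉ B} := fun n => by
    refine ⟨?_, fun h1 => hm (m + n) (Nat.le_add_right m n) ?_⟩
    · have hfix' : h ^ (m + n) • U = U := (MulAction.stabilizer G U).pow_mem hfix _
      exact hfix' ▸ Set.smul_mem_smul_set hAU
    · rwa [Set.mem_smul_set_iff_inv_smul_mem, smul_eq_mul, mul_one, ← inv_pow] at h1
  obtain ⟨i, j, hij, heq⟩ := hU.finite_one_notMem.exists_lt_map_eq_of_forall_mem hmem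
  refine hA.pow_smul_ne (Nat.sub_pos_of_lt hij) ?_
  rw [← smul_left_cancel_iff (h ^ (m + i)), smul_smul, ← pow_add, heq]
  congr 2
  omega

end SeparatesEnds

namespace IsCutSystem

variable (hE : IsCutSystem E)
include hE

lemma smul_vertex_ne (hA : A ∈ E) (hsep : SeparatesEnds A h) (hU : IsVertex E U) : h • U ≠ U := by
  intro hfix
  have hAU := hsep.notMem_of_smul_eq hU hfix
  have hAU' := hsep.compl.notMem_of_smul_eq hU (inv_smul_eq_iff.2 hfix.symm)
  have hmem : ∀ B : Set G, h • B ∈ U ↔ B ∈ U := fun B => by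
    rw [← Set.smul_mem_smul_set_iff (a := h) (x := B), hfix]
  rcases hU.eq_or_eq_compl A hA (h • A) (hE.smul_mem h A hA) hAU hAU' (by rwa [hmem])
    (by rwa [← Set.smul_set_compl, hmem]) with heq | heq
  · exact hsep.pow_smul_ne one_pos (by rw [pow_one, heq])
  · refine hsep.pow_smul_ne two_pos ?_
    rw [pow_two, mul_smul, heq, Set.smul_set_compl, heq, _root_.compl_compl]

lemma finite_stabilizer_vertex {N : Subgroup G} [N.FiniteIndex]
    (hsep : ∀ h ∈ N, h ≠ 1 → ∃ A ∈ E, SeparatesEnds A h) (v : hE.vertices) :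
    Finite (MulAction.stabilizer G v) := by
  have hinj : Function.Injective fun k : MulAction.stabilizer G v => (k.1 : G ⧸ N) := by
    intro k k' hkk'
    by_contra hne
    obtain ⟨A, hA, hsepA⟩ := hsep _ (QuotientGroup.eq.1 hkk')
      (fun h1 => hne (Subtype.ext (inv_mul_eq_one.1 h1)))
    refine hE.smul_vertex_ne hA hsepA v.2 ?_
    exact congrArg Subtype.val
      (mul_mem (inv_mem k.2) k'.2 : k.1⁻¹ * k'.1 ∈ MulAction.stabilizer G v)
  exact Finite.of_injective _ hinj

end IsCutSystem

lemma IsHalfSpaceSystem.exists_vertex_reps {V : Type*} [MulAction G V] {H : Set (Set V)}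
    (hH : IsHalfSpaceSystem H) (hG : ∀ g : G, ∀ A ∈ H, g • A ∈ H)
    (hsep : ∀ v w, Indist H v w → v = w) (R : Finset (Set V)) (hR : ∀ B ∈ R, B ∈ H)
    (hHR : ∀ A ∈ H, ∃ B ∈ R, A ∈ unorientedOrbit G B) :
    ∃ S : Set V, S.Finite ∧ ∀ v, ∃ s ∈ S, ∃ g : G, v = g • s := by
  rcases isEmpty_or_nonempty V with _ | ⟨⟨o⟩⟩
  · exact ⟨∅, Set.finite_empty, isEmptyElim⟩
  have : Nonempty V := ⟨o⟩
  choose! p q hpq using hH.exists_isEdge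
  refine ⟨insert o (p '' R ∪ q '' R), by toFinite_tac, fun v => ?_⟩
  by_cases hv : Indist H v o
  · exact ⟨o, Set.mem_insert o _, 1, by rw [one_smul, hsep v o hv]⟩
  obtain ⟨A, w, -, hA⟩ := hH.exists_isGreatest hv
  obtain ⟨B, hB, g, rfl | rfl⟩ := hHR A hA.mem
  · exact ⟨p B, Or.inr (Or.inl ⟨B, hB, rfl⟩), g,
      hsep _ _ (hH.isEdge_unique hA ((hpq B (hR B hB)).smul hG g)).1⟩
  · exact ⟨q B, Or.inr (Or.inr ⟨B, hB, rfl⟩), g,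
      hsep _ _ (hH.isEdge_unique hA ((hH.isEdge_compl (hpq B (hR B hB))).smul hG g)).1⟩

section SeparatingCutSystem

variable {N : Subgroup G} [N.FiniteIndex] (hE : IsCutSystem E)
  (hsep : ∀ h ∈ N, h ≠ 1 → ∃ A ∈ E, SeparatesEnds A h)
include hE hsep

theorem CoHopfian.rigid_of_isCutSystem (hG : CoHopfian G) : Rigid G := by
  intro φ hφ
  obtain ⟨R, hR, hHR⟩ := hE.exists_reps_halfSpaces
  refine hG.bijective_of_conj_on_stabilizers hE.isHalfSpaceSystem hE.smul_mem_halfSpaces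
    hE.finite_stabilizer_halfSpace hE.smul_ne_compl hE.eq_of_indist R hR hHR fun v => ?_
  have := hE.finite_stabilizer_vertex hsep v
  obtain ⟨g, hg⟩ := hφ (MulAction.stabilizer G v) (Set.toFinite _)
  refine ⟨g⁻¹, fun k hk => ?_⟩
  have hk' : k = g * φ k * g⁻¹ := hg k hk
  nth_rewrite 2 [hk']
  group

theorem IsCutSystem.exists_coversFiniteSubgroups :
    ∃ 𝒦 : Set (Subgroup G), CoversFiniteSubgroups 𝒦 := by
  obtain ⟨R, hR, hHR⟩ := hE.exists_reps_halfSpaces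
  obtain ⟨S, hS, hVS⟩ := hE.isHalfSpaceSystem.exists_vertex_reps hE.smul_mem_halfSpaces
    hE.eq_of_indist R hR hHR
  refine ⟨(MulAction.stabilizer G ·) '' S, hS.image _, ?_, fun K hK => ?_⟩
  · rintro _ ⟨v, -, rfl⟩
    exact hE.finite_stabilizer_vertex hsep v
  · obtain ⟨v, hv⟩ := hE.exists_fixed_vertex K
    obtain ⟨s, hs, g, rfl⟩ := hVS v
    refine ⟨_, Set.mem_image_of_mem _ hs, g, fun k hk => ?_⟩
    have hk : k • g • s = g • s := hv hk
    change (g⁻¹ * k * g) • s = s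
    rw [mul_smul, mul_smul, hk, inv_smul_smul]

end SeparatingCutSystem

end CutSystems

section Cuts

variable {G : Type*} [Group G] {S A B C D F : Set G} {g h : G}

/-- The coboundary of a set `D` of vertices of the Cayley graph of `G` with respect to `S`: the
edges `(x, s)` from a vertex `x ∈ D` to a vertex `x * s ∉ D`. -/
def coboundary (S D : Set G) : Set (G × G) := {p | p.2 ∈ S ∧ p.1 ∈ D ∧ p.1 * p.2 ∉ D}

/-- The endpoints of the edges of the coboundary. -/
def boundaryVertices (S D : Set G) : Set G :=
  Prod.fst '' coboundary S D ∪ (fun p : G × G => p.1 * p.2) '' coboundary S D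

/-- A cut of the Cayley graph: a set of vertices with finite coboundary. -/
def IsCut (S D : Set G) : Prop := (coboundary S D).Finite

/-- The size of a cut; it is `0` when `D` has infinite coboundary. -/
noncomputable def cutSize (S D : Set G) : ℕ := (coboundary S D).ncard

/-- A finite symmetric generating set. -/
structure IsFiniteSymmGenerating (S : Set G) : Prop where
  finite : S.Finite
  inv_mem : ∀ s ∈ S, s⁻¹ ∈ S
  closure_eq_top : Subgroup.closure S = ⊤

lemma IsFiniteSymmGenerating.coboundary_compl (hS : IsFiniteSymmGenerating S) (D : Set G) :
    coboundary S Dᶜ = (fun p : G × G => (p.1 * p.2, p.2⁻¹)) '' coboundary S D := by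
  ext ⟨x, s⟩
  constructor
  · rintro ⟨hs, hx, hxs⟩
    exact ⟨(x * s, s⁻¹), ⟨hS.inv_mem s hs, not_not.1 hxs, by simpa using hx⟩, by simp⟩
  · rintro ⟨⟨y, t⟩, ⟨ht, hy, hyt⟩, heq⟩
    obtain ⟨rfl, rfl⟩ := Prod.mk.inj heq
    exact ⟨hS.inv_mem t ht, hyt, by simpa using hy⟩

lemma coboundary_smul (S : Set G) (g : G) (D : Set G) :
    coboundary S (g • D) = (fun p : G × G => (g * p.1, p.2)) '' coboundary S D := by
  ext ⟨x, s⟩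
  simp only [coboundary, Set.mem_ofPred_eq, Set.mem_smul_set_iff_inv_smul_mem, smul_eq_mul]
  constructor
  · rintro ⟨hs, hx, hxs⟩
    exact ⟨(g⁻¹ * x, s), ⟨hs, hx, by rwa [mul_assoc]⟩, by simp⟩
  · rintro ⟨⟨y, t⟩, ⟨ht, hy, hyt⟩, heq⟩
    obtain ⟨rfl, rfl⟩ := Prod.mk.inj heq
    exact ⟨ht, by simpa using hy, by simpa [mul_assoc] using hyt⟩

lemma IsFiniteSymmGenerating.isCut_compl (hS : IsFiniteSymmGenerating S) (hD : IsCut S D) :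
    IsCut S Dᶜ := by
  rw [IsCut, hS.coboundary_compl]; exact hD.image _

lemma IsFiniteSymmGenerating.cutSize_compl (hS : IsFiniteSymmGenerating S) (D : Set G) :
    cutSize S Dᶜ = cutSize S D := by
  rw [cutSize, hS.coboundary_compl, Set.ncard_image_of_injective, cutSize]
  rintro ⟨x, s⟩ ⟨y, t⟩ h
  simp only [Prod.mk.injEq, inv_inj] at h
  obtain ⟨hxy, rfl⟩ := h
  rw [mul_right_cancel hxy]

lemma IsCut.smul (hD : IsCut S D) (g : G) : IsCut S (g • D) := by
  rw [IsCut, coboundary_smul]; exact hD.image _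

lemma cutSize_smul (S : Set G) (g : G) (D : Set G) : cutSize S (g • D) = cutSize S D := by
  rw [cutSize, coboundary_smul, Set.ncard_image_of_injective, cutSize]
  rintro ⟨x, s⟩ ⟨y, t⟩ h
  simpa using h

lemma IsCut.finite_boundaryVertices (hD : IsCut S D) : (boundaryVertices S D).Finite :=
  (hD.image _).union (hD.image _)

lemma coboundary_inter_union_union_subset (S C D : Set G) :
    coboundary S (C ∩ D) ∪ coboundary S (C ∪ D) ⊆ coboundary S C ∪ coboundary S D := by
  rintro ⟨x, s⟩
  simp only [coboundary, Set.mem_union, Set.mem_ofPred_eq, Set.mem_inter_iff]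
  grind

lemma coboundary_inter_inter_union_subset (S C D : Set G) :
    coboundary S (C ∩ D) ∩ coboundary S (C ∪ D) ⊆ coboundary S C ∩ coboundary S D := by
  rintro ⟨x, s⟩
  simp only [coboundary, Set.mem_union, Set.mem_ofPred_eq, Set.mem_inter_iff]
  grind

lemma IsCut.inter (hC : IsCut S C) (hD : IsCut S D) : IsCut S (C ∩ D) :=
  (hC.union hD).subset (Set.subset_union_left.trans (coboundary_inter_union_union_subset S C D))

lemma IsCut.union (hC : IsCut S C) (hD : IsCut S D) : IsCut S (C ∪ D) :=
  (Set.Finite.union hC hD).subset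
    (Set.subset_union_right.trans (coboundary_inter_union_union_subset S C D))

section Submodularity

variable {α : Type*} {P P' Q Q' : Set α}

lemma ncard_add_ncard_le_of_union_inter_subset (hQ : Q.Finite) (hQ' : Q'.Finite)
    (hunion : P ∪ P' ⊆ Q ∪ Q') (hinter : P ∩ P' ⊆ Q ∩ Q') :
    P.ncard + P'.ncard ≤ Q.ncard + Q'.ncard := by
  have hP := (hQ.union hQ').subset hunion
  rw [← Set.ncard_union_add_ncard_inter P P' (hP.subset Set.subset_union_left)
    (hP.subset Set.subset_union_right), ← Set.ncard_union_add_ncard_inter Q Q' hQ hQ']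
  exact add_le_add (Set.ncard_le_ncard hunion (hQ.union hQ'))
    (Set.ncard_le_ncard hinter (hQ.inter_of_left _))

lemma ncard_add_ncard_lt_of_union_ssubset (hQ : Q.Finite) (hQ' : Q'.Finite)
    (hunion : P ∪ P' ⊂ Q ∪ Q') (hinter : P ∩ P' ⊆ Q ∩ Q') :
    P.ncard + P'.ncard < Q.ncard + Q'.ncard := by
  have hP := (hQ.union hQ').subset hunion.subset
  rw [← Set.ncard_union_add_ncard_inter P P' (hP.subset Set.subset_union_left)
    (hP.subset Set.subset_union_right), ← Set.ncard_union_add_ncard_inter Q Q' hQ hQ']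
  exact add_lt_add_of_lt_of_le (Set.ncard_lt_ncard hunion (hQ.union hQ'))
    (Set.ncard_le_ncard hinter (hQ.inter_of_left _))

end Submodularity

lemma IsCut.cutSize_inter_add_cutSize_union_le (hC : IsCut S C) (hD : IsCut S D) :
    cutSize S (C ∩ D) + cutSize S (C ∪ D) ≤ cutSize S C + cutSize S D :=
  ncard_add_ncard_le_of_union_inter_subset hC hD (coboundary_inter_union_union_subset S C D)
    (coboundary_inter_inter_union_subset S C D)

lemma IsFiniteSymmGenerating.finite_not_mem_iff_mul_mem (hS : IsFiniteSymmGenerating S)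
    (hD : IsCut S D) (t : G) : {x | ¬ (x ∈ D ↔ x * t ∈ D)}.Finite := by
  induction hS.closure_eq_top ▸ Subgroup.mem_top t using Subgroup.closure_induction with
  | mem s hs =>
    refine ((hD.image Prod.fst).union ((hS.isCut_compl hD).image Prod.fst)).subset fun x hx => ?_
    simp only [Set.mem_ofPred_eq, not_iff] at hx
    by_cases h : x ∈ D
    · exact Or.inl ⟨(x, s), ⟨hs, h, fun hxs => hx.2 hxs h⟩, rfl⟩
    · exact Or.inr ⟨(x, s), ⟨hs, h, not_not.2 (hx.1 h)⟩, rfl⟩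
  | one => simp
  | mul a b _ _ iha ihb =>
    refine (iha.union (ihb.preimage (mul_left_injective a).injOn)).subset fun x hx => ?_
    simp only [Set.mem_ofPred_eq, Set.mem_union, Set.mem_preimage, ← mul_assoc] at hx ⊢
    grind
  | inv a _ iha =>
    refine (iha.preimage (mul_left_injective a⁻¹).injOn).subset fun x hx => ?_
    simp only [Set.mem_ofPred_eq, Set.mem_preimage, inv_mul_cancel_right] at hx ⊢
    exact fun h' => hx h'.symm

lemma IsFiniteSymmGenerating.eq_univ_of_coboundary_eq_empty (hS : IsFiniteSymmGenerating S)
    (hD : coboundary S D = ∅) (hne : D.Nonempty) : D = Set.univ := by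
  obtain ⟨x, hx⟩ := hne
  have hstep : ∀ y ∈ D, ∀ s ∈ S, y * s ∈ D := fun y hy s hs =>
    by_contra fun hys => hD.subset (⟨hs, hy, hys⟩ : (y, s) ∈ coboundary S D)
  have hmul : ∀ t : G, x * t ∈ D := fun t => by
    induction hS.closure_eq_top ▸ Subgroup.mem_top t using Subgroup.closure_induction_right with
    | one => rwa [mul_one]
    | mul_right y _ s hs ih => exact mul_assoc x y s ▸ hstep _ ih s hs
    | mul_inv_cancel y _ s hs ih => exact mul_assoc x y s⁻¹ ▸ hstep _ ih _ (hS.inv_mem s hs)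
  exact Set.eq_univ_of_forall fun y => by simpa using hmul (x⁻¹ * y)

section LimitSet

variable {α : Type*} (𝒰 : Ultrafilter (Set α))

/-- The pointwise limit of sets along an ultrafilter. -/
def limitSet : Set α := {x | ∀ᶠ F in (𝒰 : Filter (Set α)), x ∈ F}

lemma eventually_agree_limitSet {B : Set α} (hB : B.Finite) :
    ∀ᶠ F in (𝒰 : Filter (Set α)), ∀ x ∈ B, (x ∈ F ↔ x ∈ limitSet 𝒰) := by
  refine (Filter.eventually_all_finite hB).2 fun x _ => ?_
  by_cases hx : x ∈ limitSet 𝒰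
  · exact Filter.Eventually.mono hx fun F hF => iff_of_true hF hx
  · exact (Ultrafilter.eventually_not.2 hx).mono fun F hF => iff_of_false hF hx

end LimitSet

section Ends

lemma containsEnd_inter : ContainsEnd (C ∩ D) h ↔ ContainsEnd C h ∧ ContainsEnd D h :=
  Filter.eventually_and

lemma ContainsEnd.mono (hC : ContainsEnd C h) (hCD : C ⊆ D) : ContainsEnd D h :=
  Filter.Eventually.mono hC fun _ hn => hCD hn

lemma ContainsEnd.nonempty (hC : ContainsEnd C h) : C.Nonempty :=
  let ⟨_, hn⟩ := Filter.Eventually.exists hC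
  ⟨_, hn⟩

variable (hS : IsFiniteSymmGenerating S) (hh : ¬ IsOfFinOrder h) (hD : IsCut S D)
include hS hh hD

lemma IsFiniteSymmGenerating.eventually_pow_mem_iff (t : G) :
    ∀ᶠ n : ℕ in Filter.atTop, (h ^ n ∈ D ↔ h ^ n * t ∈ D) := by
  rw [← Nat.cofinite_eq_atTop, Filter.eventually_cofinite]
  exact (hS.finite_not_mem_iff_mul_mem hD t).preimage
    (injective_pow_iff_not_isOfFinOrder.2 hh).injOn

lemma IsFiniteSymmGenerating.containsEnd_or_compl : ContainsEnd D h ∨ ContainsEnd Dᶜ h := by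
  obtain ⟨n, hn⟩ := Filter.eventually_atTop.1 (hS.eventually_pow_mem_iff hh hD h)
  have hconst : ∀ m ≥ n, (h ^ m ∈ D ↔ h ^ n ∈ D) := by
    intro m hm
    induction m, hm using Nat.le_induction with
    | base => rfl
    | succ m hm ih => rw [← ih, hn m hm, pow_succ]
  refine (em (h ^ n ∈ D)).imp (fun h' => ?_) fun h' => ?_
  · exact Filter.eventually_atTop.2 ⟨n, fun m hm => (hconst m hm).2 h'⟩
  · exact Filter.eventually_atTop.2 ⟨n, fun m hm => fun hm' => h' ((hconst m hm).1 hm')⟩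

lemma IsFiniteSymmGenerating.containsEnd_smul_conj (hCD : ContainsEnd D h) (g : G) :
    ContainsEnd (g • D) (g * h * g⁻¹) := by
  refine (hCD.and (hS.eventually_pow_mem_iff hh hD g⁻¹)).mono fun n hn => ?_
  rw [conj_pow, Set.mem_smul_set_iff_inv_smul_mem, smul_eq_mul]
  simpa [mul_assoc] using hn.2.1 hn.1

lemma IsFiniteSymmGenerating.separatesEnds_smul_conj (hDh : SeparatesEnds D h) (g : G) :
    SeparatesEnds (g • D) (g * h * g⁻¹) := by
  refine ⟨hS.containsEnd_smul_conj hh hD hDh.1 g, ?_⟩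
  rw [← Set.smul_set_compl, conj_inv]
  exact hS.containsEnd_smul_conj (by rwa [isOfFinOrder_inv_iff]) (hS.isCut_compl hD) hDh.2 g

end Ends

section ConnectedCuts

/-- `A` is a union of connected components of the subgraph of the Cayley graph spanned by `D`. -/
structure IsPiece (S A D : Set G) : Prop where
  subset : A ⊆ D
  mul_mem : ∀ x ∈ A, ∀ s ∈ S, x * s ∈ D → x * s ∈ A

/-- The set `D` spans a connected subgraph of the Cayley graph (or is empty). -/
def SpansConnected (S D : Set G) : Prop := ∀ A, IsPiece S A D → A.Nonempty → A = D

lemma IsPiece.coboundary_subset (hA : IsPiece S A D) : coboundary S A ⊆ coboundary S D :=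
  fun ⟨x, s⟩ ⟨hs, hx, hxs⟩ => ⟨hs, hA.subset hx, fun h' => hxs (hA.mul_mem x hx s hs h')⟩

lemma IsFiniteSymmGenerating.isPiece_diff (hS : IsFiniteSymmGenerating S) (hA : IsPiece S A D) :
    IsPiece S (D \ A) D where
  subset := Set.sdiff_subset
  mul_mem := fun x hx s hs hxs => ⟨hxs, fun h' => hx.2 <| by
    simpa using hA.mul_mem _ h' _ (hS.inv_mem s hs) (by simpa using hx.1)⟩

lemma isPiece_inter (h : ∀ x ∈ boundaryVertices S C, x ∈ F → x ∈ C) : IsPiece S (F ∩ C) F where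
  subset := Set.inter_subset_left
  mul_mem := fun x hx s hs hxs => ⟨hxs, by_contra fun hxs' =>
    hxs' (h _ (Or.inr ⟨(x, s), ⟨hs, hx.2, hxs'⟩, rfl⟩) hxs)⟩

lemma IsFiniteSymmGenerating.boundaryVertices_compl (hS : IsFiniteSymmGenerating S) (D : Set G) :
    boundaryVertices S Dᶜ = boundaryVertices S D := by
  simp [boundaryVertices, hS.coboundary_compl, Set.image_image, Set.union_comm]

lemma SpansConnected.exists_mem_boundaryVertices (hF : SpansConnected S F) (hFC : ¬ Nested F C) :
    ∃ x ∈ boundaryVertices S C, x ∈ F := by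
  by_contra! h
  have hpiece : IsPiece S (F ∩ C) F := isPiece_inter fun x hx hx' => absurd hx' (h x hx)
  obtain ⟨x, hxF, hxC⟩ := Set.not_subset.1 fun hFC' : F ⊆ Cᶜ => hFC (Or.inr (Or.inr (Or.inl hFC')))
  exact hFC (Or.inl (Set.inter_eq_left.1 (hF _ hpiece ⟨x, hxF, not_not.1 hxC⟩)))

lemma IsFiniteSymmGenerating.eq_of_agree (hS : IsFiniteSymmGenerating S) (hF : SpansConnected S F)
    (hF' : SpansConnected S Fᶜ) (hagree : ∀ x ∈ B ∪ boundaryVertices S C, (x ∈ F ↔ x ∈ C))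
    (hB : (B ∩ F).Nonempty) (hB' : (B ∩ Fᶜ).Nonempty) : F = C := by
  obtain ⟨x, hxB, hxF⟩ := hB
  obtain ⟨y, hyB, hyF⟩ := hB'
  refine Set.Subset.antisymm (Set.inter_eq_left.1 (hF (F ∩ C) ?_ ⟨x, hxF, ?_⟩))
    (Set.compl_subset_compl.1 (Set.inter_eq_left.1 (hF' (Fᶜ ∩ Cᶜ) ?_ ⟨y, hyF, ?_⟩)))
  · exact isPiece_inter fun z hz => (hagree z (Or.inr hz)).1
  · exact (hagree x (Or.inl hxB)).1 hxF
  · rw [← hS.boundaryVertices_compl] at hagree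
    exact isPiece_inter fun z hz hzF hzC => hzF ((hagree z (Or.inr hz)).2 hzC)
  · exact fun hyC => hyF ((hagree y (Or.inl hyB)).2 hyC)

lemma isCut_limitSet {𝒰 : Ultrafilter (Set G)} {n : ℕ}
    (h : ∀ᶠ F in (𝒰 : Filter (Set G)), IsCut S F ∧ cutSize S F ≤ n) : IsCut S (limitSet 𝒰) := by
  by_contra hinf
  obtain ⟨P, hP, hPfin, hPcard⟩ := Set.Infinite.exists_subset_ncard_eq hinf (n + 1)
  obtain ⟨F, hF, hFcut, hFn⟩ := ((eventually_agree_limitSet 𝒰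
    ((hPfin.image Prod.fst).union (hPfin.image fun p : G × G => p.1 * p.2))).and h).exists
  have hsub : P ⊆ coboundary S F := fun p hp =>
    let ⟨hs, hx, hxs⟩ := hP hp
    ⟨hs, (hF _ (Or.inl ⟨p, hp, rfl⟩)).2 hx, fun h' => hxs ((hF _ (Or.inr ⟨p, hp, rfl⟩)).1 h')⟩
  have := Set.ncard_le_ncard hsub hFcut
  rw [cutSize] at hFn
  omega

/-- Compactness: a limit of infinitely many such cuts would be a cut, and hence equal to those of
them that agree with it near its finite boundary. -/
lemma IsFiniteSymmGenerating.finite_setOf_cuts (hS : IsFiniteSymmGenerating S) (hB : B.Finite)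
    (n : ℕ) : {F | (IsCut S F ∧ cutSize S F ≤ n) ∧ (SpansConnected S F ∧ SpansConnected S Fᶜ) ∧
      (B ∩ F).Nonempty ∧ (B ∩ Fᶜ).Nonempty}.Finite := by
  by_contra hinf
  have := Set.Infinite.cofinite_inf_principal_neBot hinf
  set 𝒰 := Ultrafilter.of (Filter.cofinite ⊓ Filter.principal
    {F | (IsCut S F ∧ cutSize S F ≤ n) ∧ (SpansConnected S F ∧ SpansConnected S Fᶜ) ∧
      (B ∩ F).Nonempty ∧ (B ∩ Fᶜ).Nonempty})
  have hmem := Filter.le_principal_iff.1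
    ((Ultrafilter.of_le _).trans inf_le_right : (𝒰 : Filter (Set G)) ≤ _)
  have hne : ∀ᶠ F in (𝒰 : Filter (Set G)), F ≠ limitSet 𝒰 :=
    ((Ultrafilter.of_le _).trans inf_le_left : (𝒰 : Filter (Set G)) ≤ Filter.cofinite)
      (Set.finite_singleton (limitSet 𝒰)).compl_mem_cofinite
  have hL : IsCut S (limitSet 𝒰) := isCut_limitSet (Filter.mem_of_superset hmem fun F hF => hF.1)
  obtain ⟨F, ⟨hagree, hne⟩, -, ⟨hF, hF'⟩, hBF, hBF'⟩ := (((eventually_agree_limitSet 𝒰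
    (hB.union hL.finite_boundaryVertices)).and hne).and hmem).exists
  exact hne (hS.eq_of_agree hF hF' hagree hBF hBF')

end ConnectedCuts

section MinimalCuts

/-- A cut of minimal size among those separating the ends of `h`. -/
structure IsMinimalCut (S : Set G) (h : G) (D : Set G) : Prop where
  isCut : IsCut S D
  separatesEnds : SeparatesEnds D h
  cutSize_le : ∀ D', IsCut S D' → SeparatesEnds D' h → cutSize S D ≤ cutSize S D'

lemma exists_isMinimalCut (hD : IsCut S D) (hDh : SeparatesEnds D h) :
    ∃ C, IsMinimalCut S h C := by
  obtain ⟨C, hC, hmin⟩ := exists_minimalFor_of_wellFoundedLT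
    (fun D => IsCut S D ∧ SeparatesEnds D h) (cutSize S) ⟨D, hD, hDh⟩
  exact ⟨C, hC.1, hC.2, fun D' hcut hsep => (le_total _ _).elim id (hmin ⟨hcut, hsep⟩)⟩

namespace IsMinimalCut

lemma of_cutSize_le (hD : IsMinimalCut S h D) (hC : IsCut S C) (hCh : SeparatesEnds C h)
    (hle : cutSize S C ≤ cutSize S D) : IsMinimalCut S h C :=
  ⟨hC, hCh, fun D' hcut hsep => hle.trans (hD.cutSize_le D' hcut hsep)⟩

variable (hS : IsFiniteSymmGenerating S)
include hS

lemma compl (hD : IsMinimalCut S h D) : IsMinimalCut S h⁻¹ Dᶜ where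
  isCut := hS.isCut_compl hD.isCut
  separatesEnds := hD.separatesEnds.compl
  cutSize_le := fun D' hcut hsep => by
    rw [hS.cutSize_compl, ← hS.cutSize_compl D']
    exact hD.cutSize_le _ (hS.isCut_compl hcut) (inv_inv h ▸ hsep.compl)

lemma smul (hh : ¬ IsOfFinOrder h) (hD : IsMinimalCut S h D) (g : G) :
    IsMinimalCut S (g * h * g⁻¹) (g • D) where
  isCut := hD.isCut.smul g
  separatesEnds := hS.separatesEnds_smul_conj hh hD.isCut hD.separatesEnds g
  cutSize_le := fun D' hcut hsep => by
    rw [cutSize_smul, ← cutSize_smul S g⁻¹ D']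
    refine hD.cutSize_le _ (hcut.smul _) ?_
    have hh' : ¬ IsOfFinOrder (g * h * g⁻¹) := by
      simpa [isOfFinOrder_iff_pow_eq_one, conj_pow] using hh
    simpa [mul_assoc] using hS.separatesEnds_smul_conj hh' hcut hsep g⁻¹

lemma eq_of_isPiece (hD : IsMinimalCut S h D) (hA : IsPiece S A D) (hAh : SeparatesEnds A h) :
    A = D := by
  have hcob : coboundary S A = coboundary S D := Set.eq_of_subset_of_ncard_le hA.coboundary_subset
    (hD.cutSize_le A (hD.isCut.subset hA.coboundary_subset) hAh) hD.isCut
  have hempty : coboundary S (D \ A) = ∅ := by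
    refine Set.eq_empty_of_forall_notMem fun p hp => hp.2.1.2 ?_
    exact (hcob.superset ((hS.isPiece_diff hA).coboundary_subset hp)).2.1
  by_contra hne
  have huniv := hS.eq_univ_of_coboundary_eq_empty hempty
    (Set.sdiff_nonempty.2 fun hDA => hne (hA.subset.antisymm hDA))
  obtain ⟨x, hx⟩ := hAh.1.nonempty
  exact (huniv.superset (Set.mem_univ x)).2 hx

lemma spansConnected (hh : ¬ IsOfFinOrder h) (hD : IsMinimalCut S h D) : SpansConnected S D := by
  intro A hA hne
  have hsep : ∀ A' ⊆ D, ContainsEnd A' h → SeparatesEnds A' h := fun A' hA' h' =>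
    ⟨h', hD.separatesEnds.2.mono (Set.compl_subset_compl.2 hA')⟩
  rcases hS.containsEnd_or_compl hh (hD.isCut.subset hA.coboundary_subset) with hAh | hAh
  · exact hD.eq_of_isPiece hS hA (hsep A hA.subset hAh)
  · have hdiff : D \ A = D := hD.eq_of_isPiece hS (hS.isPiece_diff hA)
      (hsep _ Set.sdiff_subset (containsEnd_inter.2 ⟨hD.separatesEnds.1, hAh⟩))
    obtain ⟨x, hx⟩ := hne
    exact absurd hx (hdiff.superset (hA.subset hx)).2

end IsMinimalCut

end MinimalCuts

end Cuts

section Corners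

variable {V : Type*} {C D F : Set V}

lemma Nested.inter (hC : Nested F C) (hD : Nested F D) (hCD : ¬ Nested C D) :
    Nested F (C ∩ D) := by
  simp only [Nested, Set.subset_def, Set.mem_inter_iff, Set.mem_compl_iff] at *
  grind

lemma Nested.union (hC : Nested F C) (hD : Nested F D) (hCD : ¬ Nested C D) :
    Nested F (C ∪ D) := by
  rw [← _root_.compl_compl (C ∪ D), Set.compl_union]
  refine (hC.compl_right.inter hD.compl_right fun h => hCD ?_).compl_right
  simpa using h.compl_left.compl_right

lemma Nested.inter_or_union (hC : Nested F C) (D : Set V) :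
    Nested F (C ∩ D) ∨ Nested F (C ∪ D) := by
  rcases hC with h | h | h | h
  · exact Or.inr (Or.inl (h.trans Set.subset_union_left))
  · exact Or.inl (Or.inr (Or.inl (Set.inter_subset_left.trans h)))
  · exact Or.inl <| Or.inr <| Or.inr <| Or.inl <|
      h.trans (Set.compl_subset_compl.2 Set.inter_subset_left)
  · exact Or.inr (Or.inr (Or.inr (Or.inr (h.trans Set.subset_union_left))))

end Corners

section OptimalCuts

variable {G : Type*} [Group G] {S A B C D F : Set G} {N : Subgroup G} {g h k : G} {n : ℕ}

lemma nested_smul_iff : Nested (g • A) (g • B) ↔ Nested A B := by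
  simp only [Nested, ← Set.smul_set_compl, Set.smul_set_subset_smul_set_iff]

/-- All minimal cuts separating the ends of some nontrivial element of `N`. -/
def minimalCuts (S : Set G) (N : Subgroup G) : Set (Set G) :=
  {D | ∃ h ∈ N, h ≠ 1 ∧ IsMinimalCut S h D}

/-- The minimal cuts crossing `C`. -/
def crossingCuts (S : Set G) (N : Subgroup G) (C : Set G) : Set (Set G) :=
  {F ∈ minimalCuts S N | ¬ Nested F C}

/-- The number of minimal cuts crossing `C`; it is `0` if there are infinitely many. -/
noncomputable def crossingNumber (S : Set G) (N : Subgroup G) (C : Set G) : ℕ :=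
  (crossingCuts S N C).ncard

/-- A minimal cut separating the ends of `h` that crosses as few minimal cuts as possible. -/
structure IsOptimalCut (S : Set G) (N : Subgroup G) (h : G) (C : Set G) : Prop
    extends IsMinimalCut S h C where
  crossingNumber_le : ∀ C', IsMinimalCut S h C' → crossingNumber S N C ≤ crossingNumber S N C'

/-- All optimal cuts separating the ends of some nontrivial element of `N`. -/
def optimalCuts (S : Set G) (N : Subgroup G) : Set (Set G) :=
  {C | ∃ h ∈ N, h ≠ 1 ∧ IsOptimalCut S N h C}

/-- The nontrivial elements of the normal subgroup `N` have infinite order, and their ends can be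
separated by cuts of bounded size with respect to the generating set `S`. -/
structure HasBoundedCuts (S : Set G) (N : Subgroup G) (n : ℕ) : Prop where
  generating : IsFiniteSymmGenerating S
  normal : N.Normal
  not_isOfFinOrder : ∀ h ∈ N, h ≠ 1 → ¬ IsOfFinOrder h
  exists_isCut : ∀ h ∈ N, h ≠ 1 → ∃ D, IsCut S D ∧ SeparatesEnds D h ∧ cutSize S D ≤ n

lemma crossingNumber_compl (S : Set G) (N : Subgroup G) (C : Set G) :
    crossingNumber S N Cᶜ = crossingNumber S N C := by
  have hiff : ∀ F, Nested F Cᶜ ↔ Nested F C := fun F =>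
    ⟨fun h => _root_.compl_compl C ▸ h.compl_right, Nested.compl_right⟩
  simp only [crossingNumber, crossingCuts, hiff]

lemma optimalCuts_subset_minimalCuts : optimalCuts S N ⊆ minimalCuts S N :=
  fun _ ⟨h, hN, h1, hC⟩ => ⟨h, hN, h1, hC.toIsMinimalCut⟩

lemma IsOptimalCut.compl (hS : IsFiniteSymmGenerating S) (hC : IsOptimalCut S N h C) :
    IsOptimalCut S N h⁻¹ Cᶜ where
  toIsMinimalCut := hC.toIsMinimalCut.compl hS
  crossingNumber_le := fun C' hC' => by
    rw [crossingNumber_compl, ← crossingNumber_compl S N C']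
    exact hC.crossingNumber_le _ (inv_inv h ▸ hC'.compl hS)

lemma compl_mem_optimalCuts (hS : IsFiniteSymmGenerating S) (hC : C ∈ optimalCuts S N) :
    Cᶜ ∈ optimalCuts S N :=
  let ⟨h, hN, h1, hC⟩ := hC
  ⟨h⁻¹, N.inv_mem hN, inv_ne_one.2 h1, hC.compl hS⟩

lemma coboundary_nonempty_of_mem_minimalCuts (hS : IsFiniteSymmGenerating S)
    (hC : C ∈ minimalCuts S N) : (coboundary S C).Nonempty := by
  obtain ⟨h, -, -, hC⟩ := hC
  by_contra hne
  have huniv := hS.eq_univ_of_coboundary_eq_empty (Set.not_nonempty_iff_eq_empty.1 hne)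
    hC.separatesEnds.1.nonempty
  obtain ⟨x, hx⟩ := hC.separatesEnds.2.nonempty
  exact hx (huniv ▸ Set.mem_univ x)

namespace HasBoundedCuts

variable (H : HasBoundedCuts S N n)
include H

lemma smul_mem_minimalCuts (hF : F ∈ minimalCuts S N) (g : G) : g • F ∈ minimalCuts S N :=
  let ⟨h, hN, h1, hF⟩ := hF
  ⟨g * h * g⁻¹, H.normal.conj_mem h hN g, mt conj_eq_one_iff.1 h1,
    hF.smul H.generating (H.not_isOfFinOrder h hN h1) g⟩

lemma isCut_and_cutSize_le (hF : F ∈ minimalCuts S N) : IsCut S F ∧ cutSize S F ≤ n :=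
  let ⟨h, hN, h1, hF⟩ := hF
  let ⟨D, hD, hDh, hDn⟩ := H.exists_isCut h hN h1
  ⟨hF.isCut, (hF.cutSize_le D hD hDh).trans hDn⟩

lemma spansConnected (hF : F ∈ minimalCuts S N) : SpansConnected S F ∧ SpansConnected S Fᶜ :=
  let ⟨h, hN, h1, hF⟩ := hF
  have hh := H.not_isOfFinOrder h hN h1
  ⟨hF.spansConnected H.generating hh,
    (hF.compl H.generating).spansConnected H.generating (by rwa [isOfFinOrder_inv_iff])⟩

lemma finite_crossingCuts (hC : IsCut S C) : (crossingCuts S N C).Finite :=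
  (H.generating.finite_setOf_cuts hC.finite_boundaryVertices n).subset fun _ hF =>
    ⟨H.isCut_and_cutSize_le hF.1, H.spansConnected hF.1,
      (H.spansConnected hF.1).1.exists_mem_boundaryVertices hF.2,
      (H.spansConnected hF.1).2.exists_mem_boundaryVertices fun h =>
        hF.2 (by simpa using h.compl_left)⟩

lemma crossingNumber_smul (g : G) (C : Set G) :
    crossingNumber S N (g • C) = crossingNumber S N C := by
  have himage : crossingCuts S N (g • C) = (g • ·) '' crossingCuts S N C := by
    ext F
    constructor
    · rintro ⟨hF, hFC⟩
      refine ⟨g⁻¹ • F, ⟨H.smul_mem_minimalCuts hF _, fun h => hFC ?_⟩, smul_inv_smul g F⟩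
      simpa using nested_smul_iff (g := g).2 h
    · rintro ⟨F, ⟨hF, hFC⟩, rfl⟩
      exact ⟨H.smul_mem_minimalCuts hF g, mt nested_smul_iff.1 hFC⟩
  rw [crossingNumber, himage, Set.ncard_image_of_injective _ (MulAction.injective g),
    crossingNumber]

/-- The cut `C` itself crosses `D`, but neither of the two corners. -/
lemma crossingNumber_inter_add_crossingNumber_union_lt (hC : C ∈ minimalCuts S N) (hD : IsCut S D)
    (hCD : ¬ Nested C D) : crossingNumber S N (C ∩ D) + crossingNumber S N (C ∪ D) <
      crossingNumber S N C + crossingNumber S N D := by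
  refine ncard_add_ncard_lt_of_union_ssubset
    (H.finite_crossingCuts (H.isCut_and_cutSize_le hC).1) (H.finite_crossingCuts hD) ?_ ?_
  · refine (Set.ssubset_iff_of_subset ?_).2 ⟨C, Or.inr ⟨hC, hCD⟩, ?_⟩
    · rintro F (⟨hF, hF'⟩ | ⟨hF, hF'⟩) <;> by_contra! hFCD <;>
        simp only [crossingCuts, Set.mem_union, Set.mem_ofPred_eq, hF, true_and, not_or,
          not_not] at hFCD
      exacts [hF' (hFCD.1.inter hFCD.2 hCD), hF' (hFCD.1.union hFCD.2 hCD)]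
    · rintro (⟨-, h⟩ | ⟨-, h⟩)
      exacts [h (Or.inr (Or.inl Set.inter_subset_left)), h (Or.inl Set.subset_union_left)]
  · rintro F ⟨⟨hF, h⟩, -, h'⟩
    refine ⟨⟨hF, fun hFC => (hFC.inter_or_union D).elim h h'⟩, hF, fun hFD => ?_⟩
    rw [Set.inter_comm] at h
    rw [Set.union_comm] at h'
    exact (hFD.inter_or_union C).elim h h'

lemma exists_isOptimalCut (hN : h ∈ N) (h1 : h ≠ 1) : ∃ C, IsOptimalCut S N h C := by
  obtain ⟨D, hD, hDh, -⟩ := H.exists_isCut h hN h1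
  obtain ⟨C, hC, hmin⟩ := exists_minimalFor_of_wellFoundedLT (IsMinimalCut S h)
    (crossingNumber S N) (exists_isMinimalCut hD hDh)
  exact ⟨C, hC, fun C' hC' => (le_total _ _).elim id (hmin hC')⟩

lemma smul_mem_optimalCuts (g : G) (hC : C ∈ optimalCuts S N) : g • C ∈ optimalCuts S N := by
  obtain ⟨h, hN, h1, hC⟩ := hC
  have hN' := H.normal.conj_mem h hN g
  have h1' : g * h * g⁻¹ ≠ 1 := mt conj_eq_one_iff.1 h1
  refine ⟨_, hN', h1', hC.smul H.generating (H.not_isOfFinOrder h hN h1) g, fun C' hC' => ?_⟩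
  rw [H.crossingNumber_smul, ← H.crossingNumber_smul g⁻¹ C']
  refine hC.crossingNumber_le _ ?_
  simpa [mul_assoc] using hC'.smul H.generating (H.not_isOfFinOrder _ hN' h1') g⁻¹

/-- Otherwise the corners `C ∩ D` and `C ∪ D` would be minimal too, and one of them would cross
fewer minimal cuts. -/
lemma nested_of_containsEnd (hN : h ∈ N) (h1 : h ≠ 1) (hC : IsOptimalCut S N h C)
    (hD : IsOptimalCut S N k D) (hDh : ContainsEnd D h) (hCk : ContainsEnd Cᶜ k⁻¹) :
    Nested C D := by
  by_contra hCD
  have hsep : SeparatesEnds (C ∩ D) h := ⟨containsEnd_inter.2 ⟨hC.separatesEnds.1, hDh⟩,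
    hC.separatesEnds.2.mono (Set.compl_subset_compl.2 Set.inter_subset_left)⟩
  have hsep' : SeparatesEnds (C ∪ D) k := ⟨hD.separatesEnds.1.mono Set.subset_union_right, by
    rw [Set.compl_union]; exact containsEnd_inter.2 ⟨hCk, hD.separatesEnds.2⟩⟩
  have hsize := hC.isCut.cutSize_inter_add_cutSize_union_le hD.isCut
  have hle := hC.cutSize_le _ (hC.isCut.inter hD.isCut) hsep
  have hle' := hD.cutSize_le _ (hC.isCut.union hD.isCut) hsep'
  have hcross := hC.crossingNumber_le _ (hC.of_cutSize_le (hC.isCut.inter hD.isCut) hsep (by omega))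
  have hcross' := hD.crossingNumber_le _
    (hD.of_cutSize_le (hC.isCut.union hD.isCut) hsep' (by omega))
  have := H.crossingNumber_inter_add_crossingNumber_union_lt
    ⟨h, hN, h1, hC.toIsMinimalCut⟩ hD.isCut hCD
  omega

/-- Two cuts separating the ends of both `h` and `k` compete with each other, so that they have the
same size and the same crossing number. -/
lemma nested_of_separatesEnds (hN : h ∈ N) (h1 : h ≠ 1) (hC : IsOptimalCut S N h C)
    (hD : IsOptimalCut S N k D) (hDh : SeparatesEnds D h) (hCk : SeparatesEnds Cᶜ k) :
    Nested C D := by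
  have hcompl := H.generating.cutSize_compl C
  have hle := hC.cutSize_le D hD.isCut hDh
  have hle' := hD.cutSize_le _ (H.generating.isCut_compl hC.isCut) hCk
  have hcross := hD.crossingNumber_le _
    (hD.of_cutSize_le (H.generating.isCut_compl hC.isCut) hCk (by omega))
  rw [crossingNumber_compl] at hcross
  have hD' : IsOptimalCut S N h D := ⟨hC.of_cutSize_le hD.isCut hDh (by omega),
    fun C' hC' => hcross.trans (hC.crossingNumber_le C' hC')⟩
  exact H.nested_of_containsEnd hN h1 hC hD' hDh.1 hC.separatesEnds.2

lemma nested_of_containsEnd_left (hN : h ∈ N) (h1 : h ≠ 1) (kN : k ∈ N) (k1 : k ≠ 1)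
    (hC : IsOptimalCut S N h C) (hD : IsOptimalCut S N k D) (hDh : ContainsEnd D h) :
    Nested C D := by
  have hh' : ¬ IsOfFinOrder h⁻¹ := by
    rw [isOfFinOrder_inv_iff]; exact H.not_isOfFinOrder h hN h1
  have hk := H.not_isOfFinOrder k kN k1
  have hD' := hD.compl H.generating
  by_contra hCD
  have hCk' : ContainsEnd C k⁻¹ :=
    (H.generating.containsEnd_or_compl (by rwa [isOfFinOrder_inv_iff]) hC.isCut).resolve_right
      fun hCk => hCD (H.nested_of_containsEnd hN h1 hC hD hDh hCk)
  have hDh' : ContainsEnd Dᶜ h⁻¹ :=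
    (H.generating.containsEnd_or_compl hh' hD.isCut).resolve_left fun hDh' => hCD <| by
      have := H.nested_of_containsEnd (N.inv_mem kN) (inv_ne_one.2 k1) hD' hC hCk'
        (by rwa [_root_.compl_compl])
      simpa using this.compl_left.symm
  have hCk : ContainsEnd Cᶜ k :=
    (H.generating.containsEnd_or_compl hk hC.isCut).resolve_left fun hCk =>
      hCD (H.nested_of_containsEnd kN k1 hD hC hCk hDh').symm
  exact hCD (H.nested_of_separatesEnds hN h1 hC hD ⟨hDh, hDh'⟩
    ⟨hCk, by rwa [_root_.compl_compl]⟩)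

lemma nested (hC : C ∈ optimalCuts S N) (hD : D ∈ optimalCuts S N) : Nested C D := by
  obtain ⟨h, hN, h1, hC⟩ := hC
  obtain ⟨k, kN, k1, hD⟩ := hD
  rcases H.generating.containsEnd_or_compl (H.not_isOfFinOrder h hN h1) hD.isCut with hDh | hDh
  · exact H.nested_of_containsEnd_left hN h1 kN k1 hC hD hDh
  · have := H.nested_of_containsEnd_left hN h1 (N.inv_mem kN) (inv_ne_one.2 k1) hC
      (hD.compl H.generating) hDh
    simpa using this.compl_right

/-- The stabilizer of a cut acts freely on its finite coboundary. -/
lemma finite_stabilizer (hC : C ∈ minimalCuts S N) : Finite (MulAction.stabilizer G C) := by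
  obtain ⟨⟨x, s⟩, hxs⟩ := coboundary_nonempty_of_mem_minimalCuts H.generating hC
  refine Set.Finite.of_finite_image (f := fun g : G => (g * x, s))
    ((H.isCut_and_cutSize_le hC).1.subset ?_) fun a _ b _ hab => by simpa using hab
  rintro _ ⟨g, hg, rfl⟩
  rw [← MulAction.mem_stabilizer_iff.1 hg, coboundary_smul]
  exact ⟨(x, s), hxs, rfl⟩

lemma finite_separators (x y : G) : (separators (minimalCuts S N) x y).Finite :=
  (H.generating.finite_setOf_cuts (Set.toFinite {x, y}) n).subset fun A hA =>
    ⟨H.isCut_and_cutSize_le hA.1, H.spansConnected hA.1, ⟨y, by simp, hA.2.2⟩, x, by simp, hA.2.1⟩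

/-- Every cut has a translate whose coboundary contains an edge issued from `1`. -/
lemma exists_reps : ∃ R : Finset (Set G), (∀ B ∈ R, B ∈ optimalCuts S N) ∧
    ∀ A ∈ optimalCuts S N, ∃ B ∈ R, ∃ g : G, A = g • B := by
  have hfin : {A ∈ optimalCuts S N | ∃ s ∈ S, (1, s) ∈ coboundary S A}.Finite := by
    refine (H.generating.finite_setOf_cuts (H.generating.finite.insert 1) n).subset ?_
    rintro A ⟨hA, s, hs, -, h1, h1s⟩
    have hA := optimalCuts_subset_minimalCuts hA
    exact ⟨H.isCut_and_cutSize_le hA, H.spansConnected hA, ⟨1, by simp, h1⟩,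
      s, by simp [hs], by simpa using h1s⟩
  refine ⟨hfin.toFinset, fun B hB => (hfin.mem_toFinset.1 hB).1, fun A hA => ?_⟩
  obtain ⟨⟨x, s⟩, hxs⟩ := coboundary_nonempty_of_mem_minimalCuts H.generating
    (optimalCuts_subset_minimalCuts hA)
  refine ⟨x⁻¹ • A, hfin.mem_toFinset.2 ⟨H.smul_mem_optimalCuts _ hA, s, hxs.1, ?_⟩, x, by simp⟩
  rw [coboundary_smul]
  exact ⟨(x, s), hxs, by simp⟩

theorem isCutSystem : IsCutSystem (optimalCuts S N) where
  smul_mem := fun g _ => H.smul_mem_optimalCuts g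
  compl_mem := fun _ => compl_mem_optimalCuts H.generating
  nested := fun _ hA _ hB => H.nested hA hB
  finite_separators := fun x y => (H.finite_separators x y).subset fun _ hA =>
    ⟨optimalCuts_subset_minimalCuts hA.1, hA.2⟩
  nonempty := fun _ ⟨_, _, _, hA⟩ => hA.separatesEnds.1.nonempty
  finite_stabilizer := fun _ hA => H.finite_stabilizer (optimalCuts_subset_minimalCuts hA)
  exists_reps := H.exists_reps

lemma exists_separatesEnds (hN : h ∈ N) (h1 : h ≠ 1) :
    ∃ A ∈ optimalCuts S N, SeparatesEnds A h :=
  let ⟨A, hA⟩ := H.exists_isOptimalCut hN h1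
  ⟨A, ⟨h, hN, h1, hA⟩, hA.separatesEnds⟩

end HasBoundedCuts

end OptimalCuts

section AlmostInvariantSets

variable {G F : Type*} [Group G] [Group F] {N : Subgroup G} {D : Set G} {h : G}

/-- A set `D` is almost invariant under a subgroup `N` if right translation by any element of `N`
changes it only by a finite set. -/
def IsAlmostInvariant (N : Subgroup G) (D : Set G) : Prop :=
  ∀ t ∈ N, {x | ¬ (x ∈ D ↔ x * t ∈ D)}.Finite

/-- The set whose trace on each coset of `N` is the translate of `D` by the chosen representative
of that coset; it extends an almost invariant subset of `N` to one of `G`. -/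
def cosetExtension (N : Subgroup G) (D : Set G) : Set G :=
  {g | g * (Quotient.out (g : G ⧸ N))⁻¹ ∈ D}

lemma isAlmostInvariant_of_closure {T : Set G}
    (hT : ∀ t ∈ T, {x | ¬ (x ∈ D ↔ x * t ∈ D)}.Finite) :
    IsAlmostInvariant (Subgroup.closure T) D := by
  intro t ht
  induction ht using Subgroup.closure_induction with
  | mem t ht => exact hT t ht
  | one => simp
  | mul t u _ _ iht ihu =>
    refine (iht.union (ihu.preimage (mul_left_injective t).injOn)).subset fun x hx => ?_
    simp only [Set.mem_ofPred_eq, Set.mem_union, Set.mem_preimage, ← mul_assoc] at hx ⊢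
    tauto
  | inv t _ iht =>
    refine (iht.preimage (mul_left_injective t⁻¹).injOn).subset fun x hx => ?_
    simpa [iff_comm] using hx

lemma IsAlmostInvariant.image {f : F →* G} (hf : Function.Injective f) {D : Set F}
    (hD : IsAlmostInvariant ⊤ D) : IsAlmostInvariant f.range (f '' D) := by
  rintro _ ⟨t, rfl⟩
  refine ((hD t trivial).image f).subset fun x hx => ?_
  obtain ⟨y, rfl⟩ : x ∈ f.range := by
    by_contra hxf
    refine hx (iff_of_false ?_ ?_) <;> rintro ⟨y, -, hy⟩
    · exact hxf ⟨y, hy⟩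
    · exact hxf ⟨y * t⁻¹, by simp [hy]⟩
  refine ⟨y, ?_, rfl⟩
  simpa only [Set.mem_ofPred_eq, ← map_mul, hf.mem_set_image] using hx

lemma SeparatesEnds.image {f : F →* G} (hf : Function.Injective f) {D : Set F} {h : F}
    (hD : SeparatesEnds D h) : SeparatesEnds (f '' D) (f h) := by
  refine ⟨Filter.Eventually.mono hD.1 fun n hn => ?_, Filter.Eventually.mono hD.2 fun n hn => ?_⟩
  · rwa [← map_pow, hf.mem_set_image]
  · rwa [← map_inv, ← map_pow, Set.mem_compl_iff, hf.mem_set_image]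

lemma IsAlmostInvariant.isCut (hD : IsAlmostInvariant ⊤ D) {S : Set G} (hS : S.Finite) :
    IsCut S D := by
  refine (hS.biUnion fun s _ => (hD s trivial).image fun x => (x, s)).subset ?_
  rintro ⟨x, s⟩ ⟨hs, hx, hxs⟩
  exact Set.mem_iUnion₂_of_mem hs ⟨x, fun hc => hxs (hc.1 hx), rfl⟩

lemma IsAlmostInvariant.top_cosetExtension [N.Normal] [N.FiniteIndex] (hD : IsAlmostInvariant N D) :
    IsAlmostInvariant ⊤ (cosetExtension N D) := by
  intro t _
  have : Finite (G ⧸ N) := Subgroup.finite_quotient_of_finiteIndex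
  let ν : G ⧸ N → G := fun q => Quotient.out q * t * (Quotient.out (q * (t : G ⧸ N)))⁻¹
  have hν : ∀ q, ν q ∈ N := fun q => by
    rw [← QuotientGroup.eq_one_iff]
    simp only [ν, QuotientGroup.mk_mul, QuotientGroup.mk_inv, QuotientGroup.out_eq',
      mul_inv_cancel]
  refine (Set.finite_iUnion fun q => (hD _ (hν q)).image (· * Quotient.out q)).subset fun x hx => ?_
  refine Set.mem_iUnion.2 ⟨(x : G ⧸ N), x * (Quotient.out (x : G ⧸ N))⁻¹, ?_, by simp⟩
  have hxt : x * (Quotient.out (x : G ⧸ N))⁻¹ * ν x =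
      x * t * (Quotient.out ((x * t : G) : G ⧸ N))⁻¹ := by
    simp only [ν, QuotientGroup.mk_mul]
    group
  simpa only [Set.mem_ofPred_eq, hxt] using! hx

lemma IsAlmostInvariant.eventually_pow_mem_cosetExtension_iff [N.Normal]
    (hD : IsAlmostInvariant N D) (hN : h ∈ N) (hh : ¬ IsOfFinOrder h) :
    ∀ᶠ n : ℕ in Filter.atTop, (h ^ n ∈ cosetExtension N D ↔ h ^ n ∈ D) := by
  have hr : (Quotient.out (1 : G ⧸ N))⁻¹ ∈ N := by
    rw [← QuotientGroup.eq_one_iff, QuotientGroup.mk_inv, QuotientGroup.out_eq', inv_one]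
  have hfin := (hD _ hr).preimage (injective_pow_iff_not_isOfFinOrder.2 hh).injOn
  rw [← Nat.cofinite_eq_atTop]
  refine (Filter.eventually_cofinite.2 hfin).mono fun n hn => ?_
  have hn1 : ((h ^ n : G) : G ⧸ N) = 1 := (QuotientGroup.eq_one_iff _).2 (N.pow_mem hN n)
  rw [hn, cosetExtension, Set.mem_ofPred_eq, hn1]

lemma IsAlmostInvariant.separatesEnds_cosetExtension [N.Normal] (hD : IsAlmostInvariant N D)
    (hN : h ∈ N) (hh : ¬ IsOfFinOrder h) (hDh : SeparatesEnds D h) :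
    SeparatesEnds (cosetExtension N D) h := by
  have hpos := hD.eventually_pow_mem_cosetExtension_iff hN hh
  have hneg := hD.eventually_pow_mem_cosetExtension_iff (N.inv_mem hN)
    (isOfFinOrder_inv_iff.not.2 hh)
  exact ⟨(hpos.and hDh.1).mono fun n hn => hn.1.2 hn.2,
    (hneg.and hDh.2).mono fun n hn => hn.1.not.2 hn.2⟩

end AlmostInvariantSets

section FreeGroupCuts

variable {ι : Type*}

variable [DecidableEq ι]

/-- The half-tree of the reduced words starting with the letter `x`. -/
def wordsStartingWith (x : ι × Bool) : Set (FreeGroup ι) := {w | w.toWord.head? = some x}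

lemma head?_toWord_mul_of {w : FreeGroup ι} {i : ι} (hw : w ≠ 1)
    (hwi : w * FreeGroup.of i ≠ 1) : (w * FreeGroup.of i).toWord.head? = w.toWord.head? := by
  obtain ⟨L, z, hL⟩ : ∃ L z, w.toWord = L ++ [z] :=
    (List.eq_nil_or_concat' _).resolve_left (mt FreeGroup.toWord_eq_nil_iff.1 hw)
  have hred : FreeGroup.IsReduced (L ++ [z]) := hL ▸ FreeGroup.isReduced_toWord
  have hmul : (w * FreeGroup.of i).toWord = FreeGroup.reduce (L ++ [z] ++ [(i, true)]) := by
    rw [FreeGroup.toWord_mul, FreeGroup.toWord_of, hL]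
  rw [hmul, hL]
  by_cases hz : z = (i, false)
  · have hcancel : FreeGroup.reduce (L ++ [z] ++ [(i, true)]) = L := by
      rw [hz, List.append_assoc]
      refine (FreeGroup.reduce.Step.eq ?_).trans (hred.infix ⟨[], [z], rfl⟩).reduce_eq
      simpa using FreeGroup.Red.Step.not (L₁ := L) (L₂ := []) (x := i) (b := false)
    rw [hcancel, List.head?_append_of_ne_nil]
    rintro rfl
    exact hwi (FreeGroup.toWord_eq_nil_iff.1 (hmul.trans hcancel))
  · have hred' : FreeGroup.IsReduced (L ++ [z] ++ [(i, true)]) := by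
      refine hred.append_overlap ?_ (List.cons_ne_nil z [])
      obtain ⟨j, _ | _⟩ := z <;> simp_all
    rw [hred'.reduce_eq, List.head?_append_of_ne_nil]
    exact List.append_ne_nil_of_right_ne_nil _ (List.cons_ne_nil _ _)

lemma isAlmostInvariant_wordsStartingWith (x : ι × Bool) :
    IsAlmostInvariant ⊤ (wordsStartingWith x) := by
  rw [← FreeGroup.closure_range_of]
  refine isAlmostInvariant_of_closure ?_
  rintro _ ⟨i, rfl⟩
  refine (Set.toFinite {1, (FreeGroup.of i)⁻¹}).subset fun w hw => ?_
  by_contra hw'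
  simp only [Set.mem_insert_iff, Set.mem_singleton_iff, not_or] at hw'
  refine hw ?_
  rw [wordsStartingWith, Set.mem_ofPred_eq, Set.mem_ofPred_eq,
    head?_toWord_mul_of hw'.1 (mt eq_inv_of_mul_eq_one_left hw'.2)]

lemma separatesEnds_wordsStartingWith {L : List (ι × Bool)}
    (hL : FreeGroup.IsCyclicallyReduced L) {x : ι × Bool} (hx : L.head? = some x) :
    SeparatesEnds (wordsStartingWith x) (FreeGroup.mk L) := by
  have hpow : ∀ n : ℕ, (FreeGroup.mk L ^ n).toWord = (List.replicate n L).flatten := fun n => by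
    rw [FreeGroup.pow_mk, FreeGroup.toWord_mk, (hL.flatten_replicate n).isReduced.reduce_eq]
  refine ⟨?_, ?_⟩ <;> filter_upwards [Filter.eventually_ne_atTop 0] with n hn
  · rw [wordsStartingWith, Set.mem_ofPred_eq, hpow, List.head?_flatten_replicate hn, hx]
  · rw [wordsStartingWith, Set.mem_compl_iff, Set.mem_ofPred_eq, inv_pow, FreeGroup.toWord_inv,
      hpow, FreeGroup.invRev, List.head?_reverse, List.getLast?_map,
      List.getLast?_flatten_replicate hn, Option.map_eq_some_iff]
    rintro ⟨y, hy, rfl⟩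
    simpa using hL.2 y hy _ hx

lemma exists_separatesEnds_wordsStartingWith {h : FreeGroup ι} (h1 : h ≠ 1) :
    ∃ (x : ι × Bool) (g c : FreeGroup ι),
      h = g * c * g⁻¹ ∧ SeparatesEnds (wordsStartingWith x) c := by
  let L := FreeGroup.reduceCyclically h.toWord
  let g := FreeGroup.mk (FreeGroup.reduceCyclically.conjugator h.toWord)
  have hconj : h = g * FreeGroup.mk L * g⁻¹ := by
    rw [FreeGroup.inv_mk, FreeGroup.mul_mk, FreeGroup.mul_mk,
      FreeGroup.reduceCyclically.conj_conjugator_reduceCyclically, FreeGroup.mk_toWord]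
  have hL : L ≠ [] := fun hL => h1 (by rw [hconj, hL, ← FreeGroup.one_eq_mk]; group)
  exact ⟨L.head hL, g, FreeGroup.mk L, hconj, separatesEnds_wordsStartingWith
    (FreeGroup.reduceCyclically.isCyclicallyReduced FreeGroup.isReduced_toWord)
    (List.head?_eq_some_head hL)⟩

end FreeGroupCuts

section VirtuallyFreeGroups

variable {G : Type*} [Group G]

lemma finite_generators_of_fg (hG : Group.FG G) [IsFreeGroup G] :
    Finite (IsFreeGroup.Generators G) := by
  have : Group.FG (FreeGroup (IsFreeGroup.Generators G)) :=
    Group.fg_of_surjective (f := (IsFreeGroup.toFreeGroup G).toMonoidHom)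
      (IsFreeGroup.toFreeGroup G).surjective
  have : Group.FG (Abelianization (FreeGroup (IsFreeGroup.Generators G))) := QuotientGroup.fg _
  have : AddGroup.FG (FreeAbelianGroup (IsFreeGroup.Generators G)) := AddGroup.fg_of_group_fg
  have := Module.Finite.iff_addGroup_fg.2 this
  exact Module.Finite.finite_basis (FreeAbelianGroup.basis _)

lemma exists_isFiniteSymmGenerating (hG : Group.FG G) : ∃ S : Set G, IsFiniteSymmGenerating S := by
  obtain ⟨T, hT⟩ := hG
  refine ⟨T ∪ (T : Set G)⁻¹, T.finite_toSet.union T.finite_toSet.inv, ?_, ?_⟩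
  · rintro s (hs | hs)
    · exact Or.inr (Set.inv_mem_inv.2 hs)
    · exact Or.inl hs
  · exact top_unique (hT ▸ Subgroup.closure_mono Set.subset_union_left)

lemma exists_hasBoundedCuts_range {ι : Type*} [Finite ι] {f : FreeGroup ι →* G}
    (hf : Function.Injective f) [f.range.Normal] [f.range.FiniteIndex] {S : Set G}
    (hS : IsFiniteSymmGenerating S) : ∃ n, HasBoundedCuts S f.range n := by
  classical
  let D : ι × Bool → Set G := fun x => cosetExtension f.range (f '' wordsStartingWith x)
  have hinv : ∀ x, IsAlmostInvariant f.range (f '' wordsStartingWith x) := fun x =>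
    (isAlmostInvariant_wordsStartingWith x).image hf
  have hcut : ∀ x, IsCut S (D x) := fun x => (hinv x).top_cosetExtension.isCut hS.finite
  have htf : ∀ h : FreeGroup ι, h ≠ 1 → ¬ IsOfFinOrder (f h) := fun h h1 => by
    rw [hf.isOfFinOrder_iff]
    exact not_isOfFinOrder_of_isMulTorsionFree h1
  obtain ⟨n, hn⟩ := (Set.finite_range fun x => cutSize S (D x)).bddAbove
  refine ⟨n, hS, inferInstance, ?_, ?_⟩
  · rintro _ ⟨h, rfl⟩ h1
    exact htf h (ne_one_of_map h1)
  · rintro _ ⟨h, rfl⟩ h1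
    obtain ⟨x, g, c, rfl, hxc⟩ := exists_separatesEnds_wordsStartingWith (ne_one_of_map h1)
    have hc := htf c fun hc => h1 (by simp [hc])
    refine ⟨f g • D x, (hcut x).smul _, ?_, ?_⟩
    · rw [map_mul, map_mul, map_inv]
      exact hS.separatesEnds_smul_conj hc (hcut x)
        ((hinv x).separatesEnds_cosetExtension ⟨c, rfl⟩ hc (hxc.image hf)) _
    · rw [cutSize_smul]
      exact hn ⟨x, rfl⟩

theorem VirtuallyFree.exists_hasBoundedCuts (hG : VirtuallyFree G) (hfg : Group.FG G) :
    ∃ (S : Set G) (N : Subgroup G) (n : ℕ), N.FiniteIndex ∧ HasBoundedCuts S N n := by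
  obtain ⟨H, hH, ⟨_⟩⟩ := hG
  have : IsFreeGroup H.normalCore :=
    IsFreeGroup.ofMulEquiv (Subgroup.subgroupOfEquivOfLe H.normalCore_le)
  let e := IsFreeGroup.toFreeGroup H.normalCore
  have : Finite (IsFreeGroup.Generators H.normalCore) := finite_generators_of_fg inferInstance
  let f := H.normalCore.subtype.comp e.symm.toMonoidHom
  have hf : f.range = H.normalCore := by
    rw [MonoidHom.range_comp, MonoidHom.range_eq_top.2 e.symm.surjective, ← MonoidHom.range_eq_map,
      Subgroup.range_subtype]
  have : f.range.Normal := hf.symm ▸ H.normalCore_normal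
  have : f.range.FiniteIndex := hf.symm ▸ inferInstance
  obtain ⟨S, hS⟩ := exists_isFiniteSymmGenerating hfg
  obtain ⟨n, hn⟩ := exists_hasBoundedCuts_range (f := f)
    (Subtype.val_injective.comp e.symm.injective) hS
  exact ⟨S, f.range, n, inferInstance, hn⟩

theorem VirtuallyFree.rigid_of_coHopfian (hG : VirtuallyFree G) (hfg : Group.FG G)
    (hco : CoHopfian G) : Rigid G := by
  obtain ⟨S, N, n, _, H⟩ := hG.exists_hasBoundedCuts hfg
  exact CoHopfian.rigid_of_isCutSystem H.isCutSystem (fun _ => H.exists_separatesEnds) hco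

theorem VirtuallyFree.exists_coversFiniteSubgroups (hG : VirtuallyFree G) (hfg : Group.FG G) :
    ∃ 𝒦 : Set (Subgroup G), CoversFiniteSubgroups 𝒦 := by
  obtain ⟨S, N, n, _, H⟩ := hG.exists_hasBoundedCuts hfg
  exact H.isCutSystem.exists_coversFiniteSubgroups fun _ => H.exists_separatesEnds

lemma isFinitelyNormallyGenerated_ker {P Q : Type*} [Group P] [Group Q] (hP : Group.FG P)
    [Group.IsFinitelyPresented Q] {p : P →* Q} (hp : Function.Surjective p) :
    p.ker.IsFinitelyNormallyGenerated := by
  obtain ⟨k, φ, hφ, S, hS, hSφ⟩ := Group.IsFinitelyPresented.out (G := Q)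
  obtain ⟨X, hX⟩ := hP
  let σ : FreeGroup (Fin k) →* P := FreeGroup.lift fun i => Function.surjInv hp (φ (.of i))
  have hσ : ∀ w, p (σ w) = φ w := by
    refine DFunLike.congr_fun (f := p.comp σ) (FreeGroup.ext_hom _ _ fun i => ?_)
    simp [σ, Function.surjInv_eq hp]
  let ψ : P → FreeGroup (Fin k) := fun x => Function.surjInv hφ (p x)
  have hψ : ∀ x, φ (ψ x) = p x := fun x => Function.surjInv_eq hφ _
  let T : Set P := σ '' S ∪ (fun x => x⁻¹ * σ (ψ x)) '' X
  let q := QuotientGroup.mk' (Subgroup.normalClosure T)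
  have hqT : ∀ x ∈ T, q x = 1 := fun x hx =>
    (QuotientGroup.eq_one_iff x).2 (Subgroup.subset_normalClosure hx)
  have hφq : φ.ker ≤ (q.comp σ).ker := by
    rw [← hSφ]
    exact Subgroup.normalClosure_le_normal fun s hs => hqT _ (Or.inl ⟨s, hs, rfl⟩)
  let τ := φ.liftOfRightInverse _ (Function.rightInverse_surjInv hφ) ⟨q.comp σ, hφq⟩
  have hτ : ∀ w, τ (φ w) = q (σ w) :=
    φ.liftOfRightInverse_comp_apply _ (Function.rightInverse_surjInv hφ) ⟨q.comp σ, hφq⟩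
  have hτp : τ.comp p = q := MonoidHom.eq_of_eqOn_dense hX fun x hx => by
    have hx1 := hqT _ (Or.inr ⟨x, hx, rfl⟩)
    rw [map_mul, map_inv, inv_mul_eq_one] at hx1
    rw [MonoidHom.comp_apply, ← hψ, hτ, hx1]
  refine ⟨T, (hS.image σ).union (X.finite_toSet.image _), le_antisymm ?_ fun x hx => ?_⟩
  · refine Subgroup.normalClosure_le_normal ?_
    rintro _ (⟨s, hs, rfl⟩ | ⟨x, -, rfl⟩)
    · have : s ∈ φ.ker := hSφ ▸ Subgroup.subset_normalClosure hs
      simpa [hσ] using this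
    · simp [hσ, hψ]
  · rw [← QuotientGroup.eq_one_iff]
    change q x = 1
    rw [← hτp, MonoidHom.comp_apply, hx, map_one]

lemma isFinitelyPresented_of_finiteIndex (hG : Group.FG G) (N : Subgroup G) [N.FiniteIndex]
    [Group.IsFinitelyPresented N] : Group.IsFinitelyPresented G := by
  obtain ⟨α, _, π, hπ⟩ := Group.fg_iff_exists_freeGroup_hom_surjective_finite.1 hG
  have : (N.comap π).FiniteIndex :=
    ⟨by rw [N.index_comap_of_surjective hπ]; exact Subgroup.FiniteIndex.index_ne_zero⟩
  obtain ⟨T, hT, hTker⟩ := isFinitelyNormallyGenerated_ker inferInstance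
    (p := π.subgroupComap N) fun y => (hπ y).elim fun x hx =>
      ⟨⟨x, by simp [hx]⟩, Subtype.ext hx⟩
  refine .of_surjective π hπ ⟨Subtype.val '' T, hT.image _, le_antisymm ?_ fun w hw => ?_⟩
  · refine Subgroup.normalClosure_le_normal ?_
    rintro _ ⟨w, hw, rfl⟩
    have : w ∈ (π.subgroupComap N).ker := hTker ▸ Subgroup.subset_normalClosure hw
    exact congrArg Subtype.val this
  · have hwN : w ∈ N.comap π := by
      rw [Subgroup.mem_comap, hw]
      exact N.one_mem
    have hwT : (⟨w, hwN⟩ : N.comap π) ∈ Subgroup.normalClosure T := by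
      rw [hTker]
      exact Subtype.ext hw
    have hle : Subgroup.normalClosure T ≤
        (Subgroup.normalClosure (Subtype.val '' T)).comap (N.comap π).subtype :=
      Subgroup.normalClosure_le_normal fun x hx =>
        Subgroup.subset_normalClosure (Set.mem_image_of_mem _ hx)
    exact hle hwT

theorem VirtuallyFree.isFinitelyPresented (hG : VirtuallyFree G) (hfg : Group.FG G) :
    Group.IsFinitelyPresented G := by
  obtain ⟨H, _, ⟨_⟩⟩ := hG
  have : Finite (IsFreeGroup.Generators H) := finite_generators_of_fg inferInstance
  have : Group.IsFinitelyPresented H := .equiv (IsFreeGroup.toFreeGroup H).symm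
  exact isFinitelyPresented_of_finiteIndex hfg H

end VirtuallyFreeGroups

section Definability

variable {G : Type*} [Group G] {n k m : ℕ}

/-- A relation on tuples of group elements defined by a quantifier-free formula, whose first tuple
interprets the free variables and the second one the variables to be quantified. -/
def IsQFDefinable (P : (Fin n → G) → (Fin k → G) → Prop) : Prop :=
  ∃ φ : groupLang.BoundedFormula (Fin n) k, φ.IsQF ∧ ∀ v xs, φ.Realize v xs ↔ P v xs

/-- The tuples `u` and `v` have the same ∀∃-type in `G`. -/
def SameAEType (u v : Fin n → G) : Prop :=
  ∀ φ : groupLang.Formula (Fin n), IsAE φ → (φ.Realize u ↔ φ.Realize v)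

lemma exists_term_realize_eq_lift (G : Type*) [Group G] {β : Type} (w : FreeGroup β) :
    ∃ t : groupLang.Term β, ∀ x : β → G, t.realize x = FreeGroup.lift x w := by
  induction w using FreeGroup.induction_on with
  | C1 => exact ⟨Term.func (L := groupLang) GroupFunc.one ![], fun x => (map_one _).symm⟩
  | of i => exact ⟨Term.var i, fun x => by simp⟩
  | inv_of i _ =>
    refine ⟨Term.func (L := groupLang) GroupFunc.inv ![Term.var i], fun x => ?_⟩
    rw [map_inv, FreeGroup.lift_apply_of]
    rfl
  | mul w w' hw hw' =>
    obtain ⟨⟨t, ht⟩, t', ht'⟩ := And.intro hw hw'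
    refine ⟨Term.func (L := groupLang) GroupFunc.mul ![t, t'], fun x => ?_⟩
    rw [map_mul, ← ht, ← ht']
    rfl

namespace IsQFDefinable

variable {P Q : (Fin n → G) → (Fin k → G) → Prop}

lemma lift_eq_lift (w w' : FreeGroup (Fin n ⊕ Fin k)) :
    IsQFDefinable fun (v : Fin n → G) (xs : Fin k → G) =>
      FreeGroup.lift (Sum.elim v xs) w = FreeGroup.lift (Sum.elim v xs) w' := by
  obtain ⟨t, ht⟩ := exists_term_realize_eq_lift G w
  obtain ⟨t', ht'⟩ := exists_term_realize_eq_lift G w'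
  refine ⟨t.bdEqual t', (BoundedFormula.IsAtomic.equal t t').isQF, fun v xs => ?_⟩
  rw [BoundedFormula.realize_bdEqual, ht, ht']

lemma not (hP : IsQFDefinable P) : IsQFDefinable fun v xs => ¬ P v xs := by
  obtain ⟨φ, hφ, hφP⟩ := hP
  exact ⟨φ.not, hφ.not, fun v xs => by rw [BoundedFormula.realize_not, hφP]⟩

lemma and (hP : IsQFDefinable P) (hQ : IsQFDefinable Q) :
    IsQFDefinable fun v xs => P v xs ∧ Q v xs := by
  obtain ⟨φ, hφ, hφP⟩ := hP
  obtain ⟨ψ, hψ, hψQ⟩ := hQ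
  exact ⟨φ ⊓ ψ, hφ.inf hψ, fun v xs => by rw [BoundedFormula.realize_inf, hφP, hψQ]⟩

lemma all {ι : Type*} [Finite ι] {P : ι → (Fin n → G) → (Fin k → G) → Prop}
    (hP : ∀ i, IsQFDefinable (P i)) : IsQFDefinable fun v xs => ∀ i, P i v xs := by
  cases nonempty_fintype ι
  have hfinset (s : Finset ι) : IsQFDefinable fun v xs => ∀ i ∈ s, P i v xs := by
    classical
    induction s using Finset.induction_on with
    | empty => exact ⟨⊤, BoundedFormula.IsQF.top, fun v xs => by simp⟩
    | insert i s _ ih => simpa only [Finset.forall_mem_insert] using (hP i).and ih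
  simpa only [Finset.mem_univ, forall_true_left] using hfinset Finset.univ

lemma ex {ι : Type*} [Finite ι] {P : ι → (Fin n → G) → (Fin k → G) → Prop}
    (hP : ∀ i, IsQFDefinable (P i)) : IsQFDefinable fun v xs => ∃ i, P i v xs := by
  simpa using (all fun i => (hP i).not).not

end IsQFDefinable

lemma IsAE.alls {α : Type*} : ∀ {m : ℕ} {φ : groupLang.BoundedFormula α m}, IsAE φ → IsAE φ.alls
  | 0, _, hφ => hφ
  | _ + 1, _, hφ => hφ.all.alls

theorem SameAEType.exists_forall {u v : Fin n → G} (huv : SameAEType u v)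
    {P : (Fin n → G) → (Fin (m + 1) → G) → Prop} (hP : IsQFDefinable P)
    (hu : ∃ y : Fin m → G, ∀ g, P u (Fin.snoc y g)) :
    ∃ y : Fin m → G, ∀ g, P v (Fin.snoc y g) := by
  obtain ⟨φ, hφ, hφP⟩ := hP
  have hae : IsAE φ.not.ex.alls := (IsAE.of_existential (.ex (.of_isQF hφ.not))).alls
  have hiff := huv _ hae
  simp only [BoundedFormula.realize_alls, BoundedFormula.realize_ex, BoundedFormula.realize_not,
    hφP] at hiff
  simpa using hiff.not.1 (by simpa using hu)

end Definability

section HomConjugacy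

variable {K G : Type*} [Group K] [Group G] {f : G →* G} {𝒦 : Set (Subgroup G)}

/-- Conjugacy of families of group elements by a single element of the group. -/
def conjSetoid (κ G : Type*) [Group G] : Setoid (κ → G) where
  r a b := ∃ g : G, ∀ x, b x = g * a x * g⁻¹
  iseqv :=
    { refl := fun a => ⟨1, fun x => by simp⟩
      symm := fun {a b} ⟨g, h⟩ => ⟨g⁻¹, fun x => by rw [h]; group⟩
      trans := fun {a b c} ⟨g, h⟩ ⟨g', h'⟩ => ⟨g' * g, fun x => by rw [h', h]; group⟩ }

/-- Homomorphisms from `K` to `G` up to conjugation in `G`. -/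
def HomConjClasses (K G : Type*) [Group K] [Group G] : Type _ :=
  Quotient ((conjSetoid K G).comap ((⇑) : (K →* G) → K → G))

namespace HomConjClasses

/-- The conjugacy class of a homomorphism. -/
def mk (φ : K →* G) : HomConjClasses K G := Quotient.mk _ φ

/-- A representative of a conjugacy class of homomorphisms. -/
noncomputable def out (p : HomConjClasses K G) : K →* G := Quotient.out p

/-- The map induced on conjugacy classes of homomorphisms by an endomorphism of the target. -/
def map (f : G →* G) : HomConjClasses K G → HomConjClasses K G :=
  Quotient.map f.comp fun a b ⟨g, h⟩ => ⟨f g, fun x => by simp [h]⟩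

@[simp]
lemma mk_out (p : HomConjClasses K G) : mk p.out = p := Quotient.out_eq p

lemma map_mk (f : G →* G) (φ : K →* G) : map f (mk φ) = mk (f.comp φ) := rfl

lemma mk_eq_mk {φ ψ : K →* G} : mk φ = mk ψ ↔ ∃ g : G, ∀ x, ψ x = g * φ x * g⁻¹ :=
  Quotient.eq

lemma map_injective (hf : ∀ p q : HomConjClasses K G, p ≠ q →
    ¬ ∃ g : G, ∀ x, f (q.out x) = g * f (p.out x) * g⁻¹) :
    Function.Injective (map f : HomConjClasses K G → HomConjClasses K G) := by
  intro p q hpq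
  by_contra hne
  rw [← mk_out p, ← mk_out q, map_mk, map_mk, mk_eq_mk] at hpq
  exact hf p q hne hpq

end HomConjClasses

namespace CoversFiniteSubgroups

lemma finite_homConjClasses [Finite K] (h𝒦 : CoversFiniteSubgroups 𝒦) :
    Finite (HomConjClasses K G) := by
  have := h𝒦.finite.to_subtype
  have (L : 𝒦) : Finite (L : Subgroup G) := h𝒦.finite_of_mem L L.2
  have (L : 𝒦) : Finite (K →* (L : Subgroup G)) := DFunLike.finite _
  refine Finite.of_surjective (fun p : Σ L : 𝒦, (K →* (L : Subgroup G)) =>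
    HomConjClasses.mk ((p.1 : Subgroup G).subtype.comp p.2)) fun q => ?_
  obtain ⟨L, hL, g, hg⟩ := h𝒦.exists_conj_mem q.out.range (Set.finite_range q.out)
  refine ⟨⟨⟨L, hL⟩, ((MulAut.conj g⁻¹).toMonoidHom.comp q.out).codRestrict L
    fun x => by simpa using hg _ ⟨x, rfl⟩⟩, ?_⟩
  refine (HomConjClasses.mk_eq_mk.2 ⟨g, fun x => ?_⟩).trans q.mk_out
  simp [mul_assoc]

lemma homEquiv_id (h𝒦 : CoversFiniteSubgroups 𝒦)
    (hf : ∀ K ∈ 𝒦, ∃ c : G, ∀ k ∈ K, k = c * f k * c⁻¹) : HomEquiv f (MonoidHom.id G) := by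
  intro H hH
  obtain ⟨K, hK, g, hg⟩ := h𝒦.exists_conj_mem H hH
  obtain ⟨c, hc⟩ := hf K hK
  refine ⟨g * c * (f g)⁻¹, fun h hh => ?_⟩
  calc h = g * (g⁻¹ * h * g) * g⁻¹ := by group
    _ = g * (c * f (g⁻¹ * h * g) * c⁻¹) * g⁻¹ := by rw [← hc _ (hg h hh)]
    _ = g * c * (f g)⁻¹ * f h * (g * c * (f g)⁻¹)⁻¹ := by
      simp only [map_mul, map_inv]
      group

-- An injective self-map of the finite set of families of conjugacy classes is periodic; the family
-- of inclusions is used as the starting point.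
lemma classPermuting (h𝒦 : CoversFiniteSubgroups 𝒦)
    (hf : ∀ K ∈ 𝒦, Function.Injective (HomConjClasses.map f : HomConjClasses K G → _)) :
    ClassPermuting f := by
  have := h𝒦.finite.to_subtype
  have (K : 𝒦) : Finite (HomConjClasses (K : Subgroup G) G) :=
    have := h𝒦.finite_of_mem K K.2
    h𝒦.finite_homConjClasses
  let F (p : ∀ K : 𝒦, HomConjClasses (K : Subgroup G) G) (K : 𝒦) := (p K).map f
  have hF : Function.Injective F := fun p q hpq => funext fun K => hf K K.2 (congrFun hpq K)
  let ι (K : 𝒦) := HomConjClasses.mk (K : Subgroup G).subtype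
  have hiter (j : ℕ) : F^[j] ι = fun K => .mk ((homPow f j).comp (K : Subgroup G).subtype) := by
    induction j with
    | zero => rfl
    | succ j ih => rw [Function.iterate_succ_apply', ih]; rfl
  obtain ⟨j, hj, hper⟩ := Function.mem_periodicPts.1 (hF.mem_periodicPts ι)
  refine ⟨j, hj, h𝒦.homEquiv_id fun K hK => ?_⟩
  have hK := congrFun ((hiter j).symm.trans hper) ⟨K, hK⟩
  obtain ⟨c, hc⟩ := HomConjClasses.mk_eq_mk.1 hK
  exact ⟨c, fun k hk => hc ⟨k, hk⟩⟩

end CoversFiniteSubgroups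

lemma coe_homPow (f : G →* G) (n : ℕ) : ⇑(homPow f n) = f^[n] := by
  induction n with
  | zero => rfl
  | succ n ih => rw [Function.iterate_succ', ← ih]; rfl

lemma Rigid.bijective_of_classPermuting (hG : Rigid G) (hf : ClassPermuting f) :
    Function.Bijective f := by
  obtain ⟨n, hn, hequiv⟩ := hf
  obtain ⟨m, rfl⟩ := Nat.exists_eq_succ_of_ne_zero (Nat.one_le_iff_ne_zero.1 hn)
  have hbij := hG _ hequiv
  rw [coe_homPow] at hbij
  exact ⟨.of_comp (f := f^[m]) hbij.1,
    .of_comp (g := f^[m]) (by rw [← Function.iterate_succ']; exact hbij.2)⟩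

end HomConjugacy

section Homogeneity

variable {G : Type*} [Group G] {n m : ℕ} {u v : Fin n → G} {J : Type*} {K : J → Type*}

lemma freeGroup_lift_map {α β : Type*} (f : β → G) (g : α → β) (w : FreeGroup α) :
    FreeGroup.lift f (FreeGroup.map g w) = FreeGroup.lift (f ∘ g) w :=
  DFunLike.congr_fun (FreeGroup.ext_hom _ _ fun a => by simp :
    (FreeGroup.lift f).comp (FreeGroup.map g) = FreeGroup.lift (f ∘ g)) w

lemma isQFDefinable_lift_init [Finite J] [∀ j, Finite (K j)] {R : Set (FreeGroup (Fin m))}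
    (hR : R.Finite) (w : Fin n → FreeGroup (Fin m)) (a b : ∀ j, K j → FreeGroup (Fin m)) :
    IsQFDefinable fun (v : Fin n → G) (xs : Fin (m + 1) → G) =>
      (∀ r : R, FreeGroup.lift (Fin.init xs) r = 1) ∧
      (∀ i, FreeGroup.lift (Fin.init xs) (w i) = v i) ∧
      ∀ j, ∃ x, ¬ FreeGroup.lift (Fin.init xs) (b j x) =
        xs (Fin.last m) * FreeGroup.lift (Fin.init xs) (a j x) * (xs (Fin.last m))⁻¹ := by
  have := hR.to_subtype
  let μ : FreeGroup (Fin m) →* FreeGroup (Fin n ⊕ Fin (m + 1)) :=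
    FreeGroup.map fun i => Sum.inr i.castSucc
  let t : FreeGroup (Fin n ⊕ Fin (m + 1)) := FreeGroup.of (Sum.inr (Fin.last m))
  have hμ (v : Fin n → G) (xs : Fin (m + 1) → G) (w : FreeGroup (Fin m)) :
      FreeGroup.lift (Sum.elim v xs) (μ w) = FreeGroup.lift (Fin.init xs) w :=
    freeGroup_lift_map _ _ w
  refine .and (.all fun r => ?_) (.and (.all fun i => ?_) (.all fun j => .ex fun x => .not ?_))
  · simpa only [hμ, map_one] using IsQFDefinable.lift_eq_lift (G := G) (μ r) 1
  · simpa only [hμ, FreeGroup.lift_apply_of, Sum.elim_inl] using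
      IsQFDefinable.lift_eq_lift (G := G) (μ (w i)) (FreeGroup.of (Sum.inl i))
  · simpa only [t, hμ, map_mul, map_inv, FreeGroup.lift_apply_of, Sum.elim_inr] using
      IsQFDefinable.lift_eq_lift (G := G) (μ (b j x)) (t * μ (a j x) * t⁻¹)

-- In a presentation of `G`, that some images of the generators satisfy the relations, send the
-- words for `u` to the free variables, and that no element conjugates the image of `a j` to that of
-- `b j` is an ∃∀-property; the identity of `G` witnesses it for `u`.
theorem SameAEType.exists_hom [Group.IsFinitelyPresented G] [Finite J] [∀ j, Finite (K j)]
    (huv : SameAEType u v) (a b : ∀ j, K j → G)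
    (hab : ∀ j, ¬ ∃ g : G, ∀ x, b j x = g * a j x * g⁻¹) :
    ∃ f : G →* G, (∀ i, f (u i) = v i) ∧
      ∀ j, ¬ ∃ g : G, ∀ x, f (b j x) = g * f (a j x) * g⁻¹ := by
  obtain ⟨m, π, hπ, R, hR, hker⟩ := Group.IsFinitelyPresented.out (G := G)
  have hs := Function.surjInv_eq hπ
  set s := Function.surjInv hπ
  obtain ⟨y, hy⟩ := huv.exists_forall (isQFDefinable_lift_init hR (fun i => s (u i))
    (fun j x => s (a j x)) fun j x => s (b j x)) <| by
      refine ⟨fun i => π (FreeGroup.of i), fun g => ?_⟩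
      have hlift : FreeGroup.lift (fun i => π (FreeGroup.of i)) = π := by ext i; simp
      simp only [Fin.init_snoc, Fin.snoc_last, hlift, hs]
      exact ⟨fun r => MonoidHom.mem_ker.1 (hker ▸ Subgroup.subset_normalClosure r.2),
        fun _ => trivial, fun j => not_forall.1 fun h => hab j ⟨g, h⟩⟩
  simp only [Fin.init_snoc, Fin.snoc_last] at hy
  have hle : π.ker ≤ (FreeGroup.lift y).ker :=
    hker ▸ Subgroup.normalClosure_le_normal fun r hr => (hy 1).1 ⟨r, hr⟩
  let f : G →* G := π.liftOfSurjective hπ ⟨FreeGroup.lift y, hle⟩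
  have hf (x : G) : f x = FreeGroup.lift y (s x) := by
    rw [← π.liftOfRightInverse_comp_apply s hs ⟨FreeGroup.lift y, hle⟩ (s x), hs]
  refine ⟨f, fun i => (hf _).trans ((hy 1).2.1 i), fun j ⟨g, hg⟩ => ?_⟩
  obtain ⟨x, hx⟩ := (hy g).2.2 j
  exact hx (by rw [← hf, ← hf, hg])

theorem SameAEType.exists_mulEquiv [Group.IsFinitelyPresented G] {𝒦 : Set (Subgroup G)}
    (hG : Rigid G) (h𝒦 : CoversFiniteSubgroups 𝒦) (huv : SameAEType u v) :
    ∃ σ : G ≃* G, ∀ i, σ (u i) = v i := by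
  have := h𝒦.finite.to_subtype
  have (L : 𝒦) : Finite (L : Subgroup G) := h𝒦.finite_of_mem L L.2
  have (L : 𝒦) : Finite (HomConjClasses (L : Subgroup G) G) := h𝒦.finite_homConjClasses
  let J := Σ L : 𝒦, {p : HomConjClasses (L : Subgroup G) G × HomConjClasses (L : Subgroup G) G //
    p.1 ≠ p.2}
  obtain ⟨f, hfuv, hf⟩ := huv.exists_hom (J := J) (K := fun j => (j.1 : Subgroup G))
    (fun j => j.2.1.1.out) (fun j => j.2.1.2.out) fun j hj =>
      j.2.2 (by rw [← j.2.1.1.mk_out, ← j.2.1.2.mk_out, HomConjClasses.mk_eq_mk]; exact hj)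
  have hperm : ClassPermuting f := h𝒦.classPermuting fun L hL =>
    HomConjClasses.map_injective fun p q hpq => hf ⟨⟨L, hL⟩, (p, q), hpq⟩
  exact ⟨.ofBijective f (hG.bijective_of_classPermuting hperm), hfuv⟩

end Homogeneity

/-- Finitely generated co-Hopfian virtually free groups are ∀∃-homogeneous. -/
theorem coHopfian_virtuallyFree_aeHomogeneous
    (G : Type*) [Group G] (hfg : Group.FG G) (hvf : VirtuallyFree G) (hco : CoHopfian G)
    (n : ℕ) (u v : Fin n → G)
    (htype : ∀ φ : groupLang.Formula (Fin n), IsAE φ → (φ.Realize u ↔ φ.Realize v)) :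
    ∃ σ : G ≃* G, ∀ i, σ (u i) = v i := by
  obtain ⟨𝒦, h𝒦⟩ := hvf.exists_coversFiniteSubgroups hfg
  have hrigid : Rigid G := hvf.rigid_of_coHopfian hfg hco
  have := hvf.isFinitelyPresented hfg
  exact SameAEType.exists_mulEquiv hrigid h𝒦 htype
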